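/- arXiv:2210.00048 — 2 statements merged into one kernel-verified Lean document; each statement's English description precedes it below -/
import Mathlib

section
/- Let 𝒜 be a finite set of assets with |𝒜| > 2. A trading function f satisfies independence and translation invariance if and only if f is equivalent to an LMSR market maker (with some parameter b ≠ 0) or to a constant sum market maker. -/
/-!
**Why it is true.** The axioms of an LMSR or constant sum market maker are read off from the fact
that it is a strictly monotone transform of a sum `∑ a, φ a (I a)`.

Conversely, after a translation into the positive orthant every inventory `x` is equivalent to a
diagonal one `(u, …, u)`, and by translation invariance `U x = u` does not depend on the
translation. This yields an indifference index `U` on the whole of `ℝ^𝒜` (`Agg`, `exists_agg`):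
strictly increasing in each coordinate, independent, and satisfying `U (x + c𝟙) = U x + c`. In
particular `U` is `1`-Lipschitz. It remains to classify such `U` with `U 0 = 0` (`Agg.classify`).

*Differentiability.* Independence says that the effect of moving coordinate `i` depends only on
`x i` and `U x` (`Agg.single`), hence, as far as derivatives are concerned, only on `x i - U x`; and
that the exchange rates between `i` and `j` depend only on `x i` and `x j` (`Agg.pair`). With three
assets the values of `x i`, `x j` and `U x` can be prescribed independently near the origin
(`Agg.realize`). By the second property, three partial derivatives determine a fourth, provided the
one divided by is nonzero (`Agg.PD.exchange`). Partial derivatives never vanish: a zero derivative in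
direction `i` would propagate to all directions, against `U (δ𝟙) = δ` (`Agg.pd_pos`). They exist
almost everywhere along lines since `U` is Lipschitz, and a choice of the `j`-th coordinate outside
a null set transports existence to every point (`Agg.pd_exists`).

*Functional equation.* Write `p i x` for the partial derivatives. For `i ≠ j` the ratio
`p i x / p j x` is a function `ratio p i j` of `x i - x j`; these satisfy
`ratio p i l (a + b) = ratio p i j a * ratio p j l b` and are bounded near `0`, so they are
exponentials (`Agg.ratio_exp`). Connecting `x` to the diagonal inside a level set gives
`p i x = C i * exp (-k * (x i - U x))` with a single `k` (`Agg.pd_formula`).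

*Integration.* If `k = 0` then `U` is linear. Otherwise `exp (-k U x)` and
`∑ i, C i * exp (-k * x i)` have the same partial derivatives, and translation shows that their
difference, a constant, is `0`.
-/

/-- All coordinates of the inventory are nonnegative. -/
def NonnegInv {𝒜 : Type*} (I : 𝒜 → ℝ) : Prop := ∀ a, 0 ≤ I a

/-- All coordinates of the inventory are strictly positive. -/
def PosInv {𝒜 : Type*} (I : 𝒜 → ℝ) : Prop := ∀ a, 0 < I a

/-- A trading function on inventory vectors with nonnegative coordinates:
strictly increasing in every coordinate at strictly positive inventories, and
continuous in the sense that upper and lower level sets are closed. -/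
structure IsTradingFunction {𝒜 : Type*} [Fintype 𝒜] [DecidableEq 𝒜]
    (f : (𝒜 → ℝ) → ℝ) : Prop where
  strictMono : ∀ I : 𝒜 → ℝ, PosInv I → ∀ (a : 𝒜) (t : ℝ), I a < t →
    f I < f (Function.update I a t)
  closed_upper : ∀ J : 𝒜 → ℝ, NonnegInv J →
    IsClosed {I : 𝒜 → ℝ | NonnegInv I ∧ f J ≤ f I}
  closed_lower : ∀ J : 𝒜 → ℝ, NonnegInv J →
    IsClosed {I : 𝒜 → ℝ | NonnegInv I ∧ f I ≤ f J}

/-- Two trading functions are equivalent if they induce the same indifference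
relation on nonnegative inventories. -/
def EquivMM {𝒜 : Type*} (f g : (𝒜 → ℝ) → ℝ) : Prop :=
  ∀ I J : 𝒜 → ℝ, NonnegInv I → NonnegInv J → (f I = f J ↔ g I = g J)

/-- The inventory agreeing with `I` on `B` and with `J` off `B`. -/
def mixInv {𝒜 : Type*} [DecidableEq 𝒜] (B : Finset 𝒜) (I J : 𝒜 → ℝ) : 𝒜 → ℝ :=
  fun a => if a ∈ B then I a else J a

/-- Independence axiom. -/
def IndependentMM {𝒜 : Type*} [Fintype 𝒜] [DecidableEq 𝒜] (f : (𝒜 → ℝ) → ℝ) : Prop :=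
  ∀ (B : Finset 𝒜) (I J : 𝒜 → ℝ), NonnegInv I → NonnegInv J →
    (f (mixInv B I J) = f J ↔ f I = f (mixInv B J I))

/-- Scale invariance axiom. -/
def ScaleInvariant {𝒜 : Type*} (f : (𝒜 → ℝ) → ℝ) : Prop :=
  ∀ I J : 𝒜 → ℝ, NonnegInv I → NonnegInv J → ∀ l : ℝ, 0 < l →
    f I = f J → f (fun a => l * I a) = f (fun a => l * J a)

/-- Translation invariance axiom. -/
def TranslationInvariant {𝒜 : Type*} (f : (𝒜 → ℝ) → ℝ) : Prop :=
  ∀ (I J : 𝒜 → ℝ) (t : ℝ), NonnegInv I → NonnegInv J →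
    NonnegInv (fun a => I a + t) → NonnegInv (fun a => J a + t) →
    f I = f J → f (fun a => I a + t) = f (fun a => J a + t)

/-- One invariance axiom. -/
def OneInvariant {𝒜 : Type*} (f : (𝒜 → ℝ) → ℝ) : Prop :=
  ∀ (I : 𝒜 → ℝ) (t : ℝ), NonnegInv I → NonnegInv (fun a => I a + t) →
    f (fun a => I a + t) = f I + t

/-- Homogeneity in liquidity. -/
def HomogeneousLiq {𝒜 : Type*} (f : (𝒜 → ℝ) → ℝ) : Prop :=
  ∀ I : 𝒜 → ℝ, NonnegInv I → ∀ l : ℝ, 0 < l → f (fun a => l * I a) = l * f I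

/-- Aversion to permanent loss: upper level sets are convex. -/
def AversionPL {𝒜 : Type*} [Fintype 𝒜] (f : (𝒜 → ℝ) → ℝ) : Prop :=
  ∀ J : 𝒜 → ℝ, NonnegInv J → Convex ℝ {I : 𝒜 → ℝ | NonnegInv I ∧ f J ≤ f I}

/-- Sufficient funds axiom. -/
def SufficientFunds {𝒜 : Type*} (f : (𝒜 → ℝ) → ℝ) : Prop :=
  ∀ I J : 𝒜 → ℝ, NonnegInv I → NonnegInv J → f I = f J → PosInv I → PosInv J

/-- Symmetry axiom. -/
def SymmetricMM {𝒜 : Type*} (f : (𝒜 → ℝ) → ℝ) : Prop :=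
  ∀ (π : Equiv.Perm 𝒜) (I : 𝒜 → ℝ), NonnegInv I → f I = f (fun a => I (π a))

/-- Constant inventory elasticity market maker with parameter `γ`,
constant `c` and weights `α`. -/
noncomputable def CEMM {𝒜 : Type*} [Fintype 𝒜] (γ c : ℝ) (α : 𝒜 → ℝ)
    (I : 𝒜 → ℝ) : ℝ :=
  if γ = 0 then c * ∏ a, I a ^ α a
  else c * (∑ a, α a * I a ^ γ) ^ (1 / γ)

/-- `f` is equivalent to a CEMM with parameter `γ`. -/
def IsCEMMEquiv {𝒜 : Type*} [Fintype 𝒜] (f : (𝒜 → ℝ) → ℝ) (γ : ℝ) : Prop :=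
  ∃ (c : ℝ) (α : 𝒜 → ℝ), 0 < c ∧ (∀ a, 0 < α a) ∧ (∑ a, α a) = 1 ∧
    EquivMM f (CEMM γ c α)

/-- Logarithmic scoring rule market maker with liquidity parameter `b` and
constants `c`. -/
noncomputable def LMSR {𝒜 : Type*} [Fintype 𝒜] (b : ℝ) (c : 𝒜 → ℝ)
    (I : 𝒜 → ℝ) : ℝ :=
  -b * Real.log (∑ a, Real.exp ((c a - I a) / b))

/-- Constant sum market maker with coefficients `c`. -/
def ConstSum {𝒜 : Type*} [Fintype 𝒜] (c : 𝒜 → ℝ) (I : 𝒜 → ℝ) : ℝ :=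
  ∑ a, c a * I a

/-! ### Indifference indices -/

open Function Filter Topology

/-- The indifference index obtained from a trading function: a function on all of `ℝ^𝒜`, strictly
increasing in every coordinate, commuting with diagonal translations and independent. -/
structure Agg {𝒜 : Type*} [Fintype 𝒜] [DecidableEq 𝒜] (U : (𝒜 → ℝ) → ℝ) : Prop where
  strict : ∀ (x : 𝒜 → ℝ) (i : 𝒜) (t : ℝ), x i < t → U x < U (update x i t)
  tr : ∀ (x : 𝒜 → ℝ) (c : ℝ), U (fun a => x a + c) = U x + c
  ind : ∀ (B : Finset 𝒜) (x y : 𝒜 → ℝ), U (mixInv B x y) = U y ↔ U x = U (mixInv B y x)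

/-- The inventory with `s` at `i`, `t` at `j` and `y` elsewhere. -/
def tri {𝒜 : Type*} [DecidableEq 𝒜] (i j : 𝒜) (s t y : ℝ) : 𝒜 → ℝ :=
  fun a => if a = i then s else if a = j then t else y

/-- A function that does not decrease when a single coordinate is raised is monotone, on any
set of the form `{x | ∀ a, P (x a)}`. -/
lemma mono_of_update {𝒜 : Type*} [Fintype 𝒜] [DecidableEq 𝒜] (P : ℝ → Prop)
    (F : (𝒜 → ℝ) → ℝ)
    (h : ∀ (x : 𝒜 → ℝ) (i : 𝒜) (t : ℝ), (∀ a, P (x a)) → P t → x i ≤ t → F x ≤ F (update x i t))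
    {x y : 𝒜 → ℝ} (hx : ∀ a, P (x a)) (hy : ∀ a, P (y a)) (hxy : x ≤ y) : F x ≤ F y := by
  have key : ∀ S : Finset 𝒜, F x ≤ F (mixInv S y x) := by
    intro S
    induction S using Finset.induction_on with
    | empty => exact le_of_eq (congrArg F (by ext a; simp [mixInv]))
    | insert a S ha ih =>
      refine ih.trans ?_
      have : mixInv (insert a S) y x = update (mixInv S y x) a (y a) := by
        ext b
        by_cases hb : b = a
        · subst hb; simp [mixInv]
        · simp [mixInv, hb]
      rw [this]
      refine h _ _ _ ?_ (hy a) ?_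
      · intro b; simp only [mixInv]; split_ifs; exacts [hy b, hx b]
      · simp [mixInv, ha, hxy a]
  have e : mixInv Finset.univ y x = y := by ext a; simp [mixInv]
  simpa only [e] using key Finset.univ

namespace Agg

variable {𝒜 : Type*} [Fintype 𝒜] [DecidableEq 𝒜] {U : (𝒜 → ℝ) → ℝ}

lemma upd_strictMono (h : Agg U) (x : 𝒜 → ℝ) (i : 𝒜) : StrictMono fun ξ => U (update x i ξ) := by
  intro a b hab
  simpa using h.strict (update x i a) i b (by simpa using hab)

lemma mono (h : Agg U) {x y : 𝒜 → ℝ} (hxy : x ≤ y) : U x ≤ U y := by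
  refine mono_of_update (fun _ => True) U ?_ (fun _ => trivial) (fun _ => trivial) hxy
  intro x i t _ _ hit
  have := (h.upd_strictMono x i).monotone hit
  simpa using this

lemma const (h : Agg U) (c : ℝ) : U (fun _ => c) = U 0 + c := by
  simpa using h.tr 0 c

lemma dist_le (h : Agg U) (x y : 𝒜 → ℝ) : U x - U y ≤ ‖x - y‖ := by
  have : U x ≤ U (fun a => y a + ‖x - y‖) := by
    refine h.mono fun a => ?_
    have := (le_abs_self _).trans (norm_le_pi_norm (x - y) a)
    simp only [Pi.sub_apply] at this
    linarith
  rw [h.tr] at this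
  linarith

lemma lipschitz (h : Agg U) : LipschitzWith 1 U := by
  refine LipschitzWith.of_dist_le_mul fun x y => ?_
  rw [Real.dist_eq, dist_eq_norm, abs_le]
  have h1 := h.dist_le x y
  have h2 := h.dist_le y x
  rw [norm_sub_rev] at h2
  push_cast
  constructor <;> linarith

lemma continuous (h : Agg U) : Continuous U := h.lipschitz.continuous

lemma upd_continuous (h : Agg U) (x : 𝒜 → ℝ) (i : 𝒜) : Continuous fun ξ => U (update x i ξ) :=
  h.continuous.comp (continuous_const.update i continuous_id)

lemma upd_le (h : Agg U) (x : 𝒜 → ℝ) (i : 𝒜) {ξ η : ℝ} (hξ : ξ ≤ η) :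
    U (update x i η) ≤ U (update x i ξ) + (η - ξ) := by
  rw [← h.tr]
  refine h.mono fun a => ?_
  by_cases ha : a = i
  · subst ha; simp
  · simp [ha, hξ]

/-- Recentring `U` at `x₀`, normalised to vanish at the origin, keeps the properties. -/
lemma shift (h : Agg U) (x₀ : 𝒜 → ℝ) : Agg (fun x => U (fun a => x a + x₀ a) - U x₀) where
  strict x i t hit := by
    have := h.strict (fun a => x a + x₀ a) i (t + x₀ i) (by simpa using hit)
    have e : (fun a => update x i t a + x₀ a) = update (fun a => x a + x₀ a) i (t + x₀ i) := by
      ext b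
      by_cases hb : b = i
      · subst hb; simp
      · simp [hb]
    rw [e]; linarith
  tr x c := by
    have := h.tr (fun a => x a + x₀ a) c
    have e : (fun a => x a + c + x₀ a) = (fun a => x a + x₀ a + c) := by ext; ring
    rw [e, this]; ring
  ind B x y := by
    have := h.ind B (fun a => x a + x₀ a) (fun a => y a + x₀ a)
    have e : ∀ x y : 𝒜 → ℝ, (fun a => mixInv B x y a + x₀ a) =
        mixInv B (fun a => x a + x₀ a) (fun a => y a + x₀ a) := by
      intro x y; ext a; simp only [mixInv]; split_ifs <;> rfl
    simp only [e, sub_left_inj]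
    exact this

/-- Independence for the complement of one asset: the effect of moving coordinate `i` depends only
on the coordinate and on the current level. -/
lemma single (h : Agg U) {x x' : 𝒜 → ℝ} {i : 𝒜} (hi : x i = x' i) (hU : U x = U x') (ξ : ℝ) :
    U (update x i ξ) = U (update x' i ξ) := by
  have := h.ind ({i}ᶜ) x (update x' i ξ)
  have e1 : mixInv ({i}ᶜ) x (update x' i ξ) = update x i ξ := by
    ext a
    by_cases ha : a = i
    · subst ha; simp [mixInv]
    · simp [mixInv, ha]
  have e2 : mixInv ({i}ᶜ) (update x' i ξ) x = x' := by
    ext a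
    by_cases ha : a = i
    · subst ha; simp [mixInv, hi]
    · simp [mixInv, ha]
  rw [e1, e2] at this
  exact this.2 hU

/-- Independence for a pair of assets: whether two moves of coordinates `i` and `j` compensate
each other does not depend on the other coordinates. -/
lemma pair (h : Agg U) {x x' : 𝒜 → ℝ} {i j : 𝒜} (hij : i ≠ j) (hi : x i = x' i) (hj : x j = x' j)
    (α β : ℝ) :
    U (update x i α) = U (update x j β) ↔ U (update x' i α) = U (update x' j β) := by
  have := h.ind {i, j} (update x i α) (update x' j β)
  have e1 : mixInv {i, j} (update x i α) (update x' j β) = update x' i α := by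
    ext a
    by_cases ha : a = i
    · subst ha; simp [mixInv]
    by_cases ha' : a = j
    · subst ha'; simp [mixInv, hij.symm, hj]
    · simp [mixInv, ha, ha']
  have e2 : mixInv {i, j} (update x' j β) (update x i α) = update x j β := by
    ext a
    by_cases ha : a = i
    · subst ha; simp [mixInv, hij, hi]
    by_cases ha' : a = j
    · subst ha'; simp [mixInv]
    · simp [mixInv, ha, ha']
  rw [e1, e2] at this
  exact this.symm

/-- Order version of `Agg.pair` for upward moves. -/
lemma pair_le (h : Agg U) {x x' : 𝒜 → ℝ} {i j : 𝒜} (hij : i ≠ j) (hi : x i = x' i)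
    (hj : x j = x' j) {α β : ℝ} (hα : x i ≤ α) (hβ : x j ≤ β)
    (hle : U (update x j β) ≤ U (update x i α)) :
    U (update x' j β) ≤ U (update x' i α) := by
  have h0 : U (update x i (x i)) ≤ U (update x j β) := by
    have := (h.upd_strictMono x j).monotone hβ
    simpa using this
  obtain ⟨γ, hγ, hγe⟩ := intermediate_value_Icc hα (h.upd_continuous x i).continuousOn ⟨h0, hle⟩
  have := (h.pair hij hi hj γ β).1 hγe
  rw [← this]
  exact (h.upd_strictMono x' i).monotone hγ.2

/-- Near the origin, the `i`-th and `j`-th coordinates of a point of level `0` can be prescribed,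
since a third asset is available to compensate. -/
lemma realize (h : Agg U) (h0 : U 0 = 0) {i j l : 𝒜} (hil : i ≠ l) (hjl : j ≠ l) :
    ∃ ε > 0, ∀ s t : ℝ, |s| < ε → |t| < ε → ∃ y, U (tri i j s t y) = 0 := by
  have c1 : ∀ y, Continuous fun p : ℝ × ℝ => U (tri i j p.1 p.2 y) := by
    intro y
    refine h.continuous.comp (continuous_pi fun a => ?_)
    simp only [tri]; split_ifs <;> fun_prop
  have lt1 : U (tri i j 0 0 (-1)) < 0 := by
    have := h.strict (update (0 : 𝒜 → ℝ) l (-1)) l 0 (by simp)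
    have e : update (update (0 : 𝒜 → ℝ) l (-1)) l 0 = 0 := by ext a; simp
    rw [e, h0] at this
    refine lt_of_le_of_lt (h.mono fun a => ?_) this
    by_cases ha : a = l
    · subst ha; simp [tri, hil.symm, hjl.symm]
    · simp only [tri, update_of_ne ha, Pi.zero_apply]; split_ifs <;> norm_num
  have lt2 : 0 < U (tri i j 0 0 1) := by
    have := h.strict 0 l 1 (by simp)
    rw [h0] at this
    refine lt_of_lt_of_le this (h.mono fun a => ?_)
    by_cases ha : a = l
    · subst ha; simp [tri, hil.symm, hjl.symm]
    · simp only [tri, update_of_ne ha, Pi.zero_apply]; split_ifs <;> norm_num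
  have e1 : ∀ᶠ p : ℝ × ℝ in 𝓝 (0, 0), U (tri i j p.1 p.2 (-1)) < 0 :=
    ((c1 (-1)).tendsto (0, 0)).eventually (gt_mem_nhds lt1)
  have e2 : ∀ᶠ p : ℝ × ℝ in 𝓝 (0, 0), 0 < U (tri i j p.1 p.2 1) :=
    ((c1 1).tendsto (0, 0)).eventually (lt_mem_nhds lt2)
  obtain ⟨ε, hε, H⟩ := Metric.eventually_nhds_iff.1 (e1.and e2)
  refine ⟨ε, hε, fun s t hs ht => ?_⟩
  have := @H (s, t) (by simp [Prod.dist_eq, hs, ht])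
  have c2 : Continuous fun y => U (tri i j s t y) := by
    refine h.continuous.comp (continuous_pi fun a => ?_)
    simp only [tri]; split_ifs <;> fun_prop
  obtain ⟨y, -, hy⟩ := intermediate_value_Icc (show (-1 : ℝ) ≤ 1 by norm_num) c2.continuousOn
    ⟨this.1.le, this.2.le⟩
  exact ⟨y, hy⟩

end Agg

/-! ### Positivity of partial derivatives -/

/-- If `α` and `β` match exactly when `α₂` and `β₂` do, then the derivative of `α₂` is determined by
those of `α`, `β` and `β₂`: locally `α₂ = β₂ ∘ β⁻¹ ∘ α`. -/
lemma hasDerivAt_of_match {α β α₂ β₂ : ℝ → ℝ} {a₀ b₀ p q q₂ : ℝ}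
    (hα : StrictMono α) (hβ : StrictMono β)
    (hβc : Continuous β)
    (h0 : α a₀ = β b₀) (hm : ∀ a b, α a = β b ↔ α₂ a = β₂ b)
    (dα : HasDerivAt α p a₀) (dβ : HasDerivAt β q b₀) (dβ₂ : HasDerivAt β₂ q₂ b₀)
    (hq : 0 < q) : HasDerivAt α₂ (p * q₂ / q) a₀ := by
  set φ : ℝ → ℝ := fun a => invFun β (α a) with hφ
  have bracket : ∀ ε > 0, ∀ᶠ a in 𝓝 a₀, β (φ a) = α a ∧ |φ a - b₀| < ε := by
    intro ε hε
    have h1 : β (b₀ - ε) < α a₀ := by rw [h0]; exact hβ (by linarith)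
    have h2 : α a₀ < β (b₀ + ε) := by rw [h0]; exact hβ (by linarith)
    filter_upwards [dα.continuousAt.eventually (lt_mem_nhds h1),
      dα.continuousAt.eventually (gt_mem_nhds h2)] with a ha1 ha2
    obtain ⟨b, -, hb⟩ := intermediate_value_Icc (show b₀ - ε ≤ b₀ + ε by linarith)
      hβc.continuousOn ⟨ha1.le, ha2.le⟩
    have e : β (φ a) = α a := invFun_eq ⟨b, hb⟩
    refine ⟨e, ?_⟩
    rw [← e] at ha1 ha2
    rw [abs_lt]
    constructor
    · linarith [hβ.lt_iff_lt.1 ha1]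
    · linarith [hβ.lt_iff_lt.1 ha2]
  have hφt : Tendsto φ (𝓝[≠] a₀) (𝓝[≠] b₀) := by
    refine tendsto_nhdsWithin_iff.2 ⟨?_, ?_⟩
    · rw [Metric.tendsto_nhds]
      intro ε hε
      filter_upwards [nhdsWithin_le_nhds (bracket ε hε)] with a ha
      rw [Real.dist_eq]; exact ha.2
    · filter_upwards [nhdsWithin_le_nhds (bracket 1 one_pos), self_mem_nhdsWithin] with a ha hne
      intro hc
      rw [Set.mem_singleton_iff] at hc
      rw [hc, ← h0] at ha
      exact hne (hα.injective ha.1.symm)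
  rw [hasDerivAt_iff_tendsto_slope] at dα dβ dβ₂ ⊢
  have T := (dα.mul (dβ₂.comp hφt)).div (dβ.comp hφt) hq.ne'
  refine T.congr' ?_
  have hφne := hφt.eventually self_mem_nhdsWithin
  filter_upwards [nhdsWithin_le_nhds (bracket 1 one_pos), self_mem_nhdsWithin, hφne]
    with a ha hne hne'
  have e2 : α₂ a = β₂ (φ a) := (hm _ _).1 ha.1.symm
  have e0 : α₂ a₀ = β₂ b₀ := (hm _ _).1 h0
  have hne1 : φ a - b₀ ≠ 0 := sub_ne_zero.2 hne'
  have hne2 : a - a₀ ≠ 0 := sub_ne_zero.2 hne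
  have hne3 : β (φ a) - β b₀ ≠ 0 := sub_ne_zero.2 fun hc => hne' (hβ.injective hc)
  simp only [Pi.div_apply, comp_apply, slope_def_field, e2, e0, ← h0, ← ha.1]
  rw [← h0] at hne3
  field_simp

/-- A strictly monotone Lipschitz function has a point of positive derivative in every interval. -/
lemma exists_deriv_pos {g : ℝ → ℝ} (hg : StrictMono g) (hL : LipschitzWith 1 g) {a b : ℝ}
    (hab : a < b) : ∃ ξ ∈ Set.Icc a b, ∃ p > 0, HasDerivAt g p ξ := by
  by_contra! hc
  have hd : ∀ x ∈ Set.uIcc a b, deriv g x = 0 := by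
    intro x hx
    rw [Set.uIcc_of_le hab.le] at hx
    by_cases hdx : DifferentiableAt ℝ g x
    · refine le_antisymm ?_ hg.monotone.deriv_nonneg
      by_contra! hpos
      exact hc x hx _ hpos hdx.hasDerivAt
    · exact deriv_zero_of_not_differentiableAt hdx
  have := (hL.lipschitzOnWith.absolutelyContinuousOnInterval
    (f := g) (a := a) (b := b)).integral_deriv_eq_sub
  rw [intervalIntegral.integral_congr (g := fun _ => (0 : ℝ)) hd] at this
  simp at this
  linarith [hg hab]

lemma exists_third {𝒜 : Type*} [Fintype 𝒜] [DecidableEq 𝒜] (hcard : 2 < Fintype.card 𝒜)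
    (i j : 𝒜) : ∃ l, l ≠ i ∧ l ≠ j := by
  have : ({i, j} : Finset 𝒜) ≠ Finset.univ := by
    intro hc
    have := Finset.card_le_two (a := i) (b := j)
    rw [hc, Finset.card_univ] at this
    omega
  obtain ⟨l, hl⟩ : ∃ l, l ∉ ({i, j} : Finset 𝒜) := by
    by_contra! hc
    exact this (Finset.eq_univ_iff_forall.2 hc)
  simp at hl
  exact ⟨l, hl.1, hl.2⟩

namespace Agg

variable {𝒜 : Type*} [Fintype 𝒜] [DecidableEq 𝒜] {U : (𝒜 → ℝ) → ℝ}

/-- `p` is the partial derivative of `U` at `x` in direction `i`. -/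
def PD (U : (𝒜 → ℝ) → ℝ) (i : 𝒜) (x : 𝒜 → ℝ) (p : ℝ) : Prop :=
  HasDerivAt (fun ξ => U (update x i ξ)) p (x i)

lemma PD.unique {𝒜 : Type*} [DecidableEq 𝒜] {U : (𝒜 → ℝ) → ℝ} {i : 𝒜}
    {x : 𝒜 → ℝ} {p q : ℝ} (hp : PD U i x p) (hq : PD U i x q) : p = q :=
  HasDerivAt.unique hp hq

lemma PD.congr (h : Agg U) {i : 𝒜} {x x' : 𝒜 → ℝ} {p : ℝ} (hp : PD U i x p) (hi : x i = x' i)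
    (hU : U x = U x') : PD U i x' p := by
  have : (fun ξ => U (update x' i ξ)) = fun ξ => U (update x i ξ) := by
    ext ξ; exact (h.single hi hU ξ).symm
  unfold PD
  rw [this, ← hi]; exact hp

lemma upd_zero {𝒜 : Type*} [DecidableEq 𝒜] (i : 𝒜) : update (0 : 𝒜 → ℝ) i 0 = 0 := by ext a; simp

lemma upd_add {𝒜 : Type*} [DecidableEq 𝒜] (x : 𝒜 → ℝ) (i : 𝒜) (ξ c : ℝ) :
    (fun a => update x i ξ a + c) = update (fun a => x a + c) i (ξ + c) := by
  ext b
  by_cases hb : b = i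
  · subst hb; simp
  · simp [hb]

lemma PD.tr (h : Agg U) {i : 𝒜} {x : 𝒜 → ℝ} {p : ℝ} (hp : PD U i x p) (c : ℝ) :
    PD U i (fun a => x a + c) p := by
  have : (fun ξ => U (update (fun a => x a + c) i ξ)) = fun ξ => U (update x i (ξ - c)) + c := by
    ext ξ; rw [← h.tr, upd_add, sub_add_cancel]
  unfold PD at hp ⊢
  rw [this]
  refine HasDerivAt.add_const c ?_
  have := HasDerivAt.comp_sub_const (x i + c) c (f := fun ξ => U (update x i ξ)) (f' := p)
    (by simpa using hp)
  exact this

/-- A partial derivative at `x` only depends on `x i - U x`. -/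
lemma PD.congr' (h : Agg U) {i : 𝒜} {x x' : 𝒜 → ℝ} {p : ℝ} (hp : PD U i x p)
    (hi : x i - U x = x' i - U x') : PD U i x' p := by
  refine PD.congr h (PD.tr h hp (U x' - U x)) (show x i + (U x' - U x) = x' i by linarith) ?_
  rw [h.tr]; ring

/-- If `x` and `x'` agree at `i` and `j`, three partial derivatives, the one
divided by being positive, give the fourth. -/
lemma PD.exchange (h : Agg U) {i j : 𝒜} (hij : i ≠ j) {x x' : 𝒜 → ℝ} (hi : x i = x' i)
    (hj : x j = x' j) {p q q' : ℝ} (hp : PD U i x p) (hq : PD U j x q)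
    (hq' : PD U j x' q') (hq0 : 0 < q) : PD U i x' (p * q' / q) := by
  unfold PD at *
  rw [← hj] at hq'
  rw [← hi]
  exact hasDerivAt_of_match (h.upd_strictMono x i) (h.upd_strictMono x j) (h.upd_continuous x j)
    (by simp) (h.pair hij hi hj) hp hq hq' hq0

lemma upd_lipschitz (h : Agg U) (x : 𝒜 → ℝ) (i : 𝒜) :
    LipschitzWith 1 fun ξ => U (update x i ξ) := by
  refine LipschitzWith.of_le_add fun ξ η => ?_
  rcases le_total ξ η with hle | hle
  · have := (h.upd_strictMono x i).monotone hle
    exact this.trans (le_add_of_nonneg_right dist_nonneg)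
  · have := h.upd_le x i hle
    rwa [Real.dist_eq, abs_of_nonneg (by linarith)]

/-- If `U` has a partial derivative in direction `i` at the origin, it is positive. Otherwise,
by independence every coordinate `j ≠ i` would contribute only `o(δ)` when raised by `δ` near the
origin, and so `U (δ, …, δ) - U 0` would be `o(δ)` as well; but it equals `δ`. -/
lemma pd_pos_zero (h : Agg U) (hcard : 2 < Fintype.card 𝒜) (h0 : U 0 = 0) {i : 𝒜} {p : ℝ}
    (hp : PD U i 0 p) : 0 < p := by
  have third := exists_third hcard
  -- a uniform radius for `Agg.realize`
  have hreal : ∃ ε > 0, ∀ j, ∀ s t : ℝ, |s| < ε → |t| < ε → ∃ y, U (tri i j s t y) = 0 := by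
    choose l hl1 hl2 using third i
    choose ε hε H using fun j => h.realize h0 (hl1 j).symm (hl2 j).symm
    have hne : (Finset.univ : Finset 𝒜).Nonempty := ⟨i, Finset.mem_univ i⟩
    refine ⟨Finset.univ.inf' hne ε, (Finset.lt_inf'_iff hne).2 fun j _ => hε j, ?_⟩
    intro j s t hs ht
    have := Finset.inf'_le ε (Finset.mem_univ j)
    exact H j s t (hs.trans_le this) (ht.trans_le this)
  obtain ⟨ε, hε, H⟩ := hreal
  -- a point `v₀` near the origin where the derivative in direction `i` is positive
  have hcont : Continuous fun ξ => ξ - U (update 0 i ξ) :=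
    continuous_id.sub (h.upd_continuous 0 i)
  have ev : ∀ᶠ ξ in 𝓝 (0 : ℝ), |ξ - U (update 0 i ξ)| < ε / 2 := by
    have := (hcont.abs.tendsto 0).eventually (gt_mem_nhds
      (show |(0 : ℝ) - U (update 0 i 0)| < ε / 2 by rw [upd_zero, h0]; simpa using hε))
    exact this
  obtain ⟨r, hr, Hr⟩ := Metric.eventually_nhds_iff.1 ev
  obtain ⟨ξ, hξ, q, hq, hdq⟩ := exists_deriv_pos (h.upd_strictMono 0 i) (h.upd_lipschitz 0 i)
    (show (0 : ℝ) < r / 2 by linarith)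
  have hs := @Hr ξ (by
    rw [Real.dist_eq, sub_zero, abs_of_nonneg hξ.1]; linarith [hξ.2])
  set v₀ : 𝒜 → ℝ := fun a => update (0 : 𝒜 → ℝ) i ξ a + (-U (update 0 i ξ)) with hv₀
  have hv₀U : U v₀ = 0 := by rw [hv₀, h.tr]; ring
  set s : ℝ := v₀ i with hs_def
  have hs' : |s| < ε / 2 := by
    have : s = ξ - U (update 0 i ξ) := by simp [hs_def, hv₀, sub_eq_add_neg]
    rw [this]; exact hs
  have hPD : PD U i v₀ q := by
    refine PD.tr h ?_ _
    unfold PD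
    simpa using hdq
  -- a linear lower bound for the growth at `v₀`
  obtain ⟨C, hC1, hC⟩ : ∃ C : ℝ, 1 ≤ C ∧ ∀ᶠ δ in 𝓝[>] (0 : ℝ), δ ≤ U (update v₀ i (s + C * δ)) := by
    refine ⟨max 1 (2 / q), le_max_left _ _, ?_⟩
    set C := max 1 (2 / q)
    have hCq : 2 ≤ C * q := by
      have := mul_le_mul_of_nonneg_right (le_max_right 1 (2 / q)) hq.le
      rwa [div_mul_cancel₀ _ hq.ne'] at this
    have hCpos : 0 < C := lt_of_lt_of_le one_pos (le_max_left _ _)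
    have hPD' : HasDerivAt (fun ξ => U (update v₀ i ξ)) q s := hPD
    have hcomp : HasDerivAt (fun δ => U (update v₀ i (s + C * δ))) (q * C) 0 := by
      have h2 : HasDerivAt (fun δ => s + C * δ) C 0 := by
        simpa using ((hasDerivAt_id (0 : ℝ)).const_mul C).const_add s
      exact HasDerivAt.comp (0 : ℝ) (h₂ := fun ξ => U (update v₀ i ξ)) (by simpa using hPD') h2
    have hsl := (hasDerivAt_iff_tendsto_slope.1 hcomp).mono_left
      (show 𝓝[>] (0 : ℝ) ≤ 𝓝[≠] 0 from nhdsWithin_mono 0 fun x hx => ne_of_gt hx)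
    have h1 : 1 < q * C := by linarith
    filter_upwards [hsl.eventually (lt_mem_nhds h1), self_mem_nhdsWithin] with δ hδ hδ0
    have hδ0 : 0 < δ := hδ0
    rw [slope_def_field] at hδ
    simp only [mul_zero, add_zero, sub_zero, hs_def, update_eq_self, hv₀U] at hδ
    rw [lt_div_iff₀ hδ0] at hδ
    linarith
  -- every other coordinate contributes at most as much as `i` at the origin
  have step : ∀ δ : ℝ, 0 < δ → δ ≤ U (update v₀ i (s + C * δ)) → ∀ j, j ≠ i → ∀ x : 𝒜 → ℝ,
      x j = 0 → 0 ≤ U x → U x < ε / 2 → U (update x j δ) ≤ U x + U (update 0 i (C * δ)) := by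
    intro δ hδ hle j hji x hxj hux hux'
    set u := U x with hu
    obtain ⟨y, hy⟩ := H j 0 (-u) (by simpa using hε) (by rw [abs_neg, abs_of_nonneg hux]; linarith)
    obtain ⟨z, hz⟩ := H j s (s - u) (by linarith) (by
      have := abs_sub s u
      rw [abs_of_nonneg hux] at this
      exact lt_of_le_of_lt this (by linarith))
    set w := tri i j 0 (-u) y with hw
    set v := tri i j s (s - u) z with hv
    have hwi : w i = 0 := by simp [hw, tri]
    have hwj : w j = -u := by simp [hw, tri, hji]
    have hvi : v i = s := by simp [hv, tri]
    have hvj : v j = s - u := by simp [hv, tri, hji]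
    have i1 : U (update v i (s + C * δ)) = U (update v₀ i (s + C * δ)) :=
      h.single (by rw [hvi]) (by rw [hz, hv₀U]) _
    have i2 : U (update v j (s - u + δ)) ≤ U (update v i (s + C * δ)) := by
      have := h.upd_le v j (show s - u ≤ s - u + δ by linarith)
      have e : U (update v j (s - u)) = 0 := by rw [← hvj, update_eq_self, hz]
      rw [i1]; linarith
    have i3 := h.pair_le (x := v) (x' := fun a => w a + s) hji.symm (by simp [hvi, hwi])
      (by simp [hvj, hwj]; ring) (by rw [hvi]; nlinarith) (by rw [hvj]; linarith) i2
    have e1 : U (update (fun a => w a + s) j (s - u + δ)) = U (update w j (-u + δ)) + s := by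
      rw [← h.tr, upd_add]; congr 2; ring
    have e2 : U (update (fun a => w a + s) i (s + C * δ)) = U (update w i (C * δ)) + s := by
      rw [← h.tr, upd_add]; congr 2; ring
    have e3 : U (update w i (C * δ)) = U (update 0 i (C * δ)) :=
      h.single (by simp [hwi]) (by rw [hy, h0]) _
    have e4 : U (update x j δ) = U (update w j (-u + δ)) + u := by
      rw [← h.tr, upd_add, show -u + δ + u = δ by ring]
      refine h.single (by simp [hwj, hxj]) ?_ _
      rw [h.tr, hy, zero_add]
    linarith
  -- raising all coordinates in turn, `i` first
  have total : ∀ δ : ℝ, 0 < δ → δ < ε / 2 → δ ≤ U (update v₀ i (s + C * δ)) →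
      δ ≤ Fintype.card 𝒜 * U (update 0 i (C * δ)) := by
    intro δ hδ hδε hle
    set A := U (update 0 i (C * δ)) with hA
    have hA0 : 0 ≤ A := by
      have := (h.upd_strictMono 0 i).monotone (show (0 : ℝ) ≤ C * δ by positivity)
      have e : U (update (0 : 𝒜 → ℝ) i 0) = 0 := by
        rw [upd_zero, h0]
      simp only [e] at this
      exact this
    have key : ∀ S : Finset 𝒜, i ∉ S →
        U (fun a => if a ∈ insert i S then δ else 0) ≤ (insert i S).card * A := by
      intro S
      induction S using Finset.induction_on with
      | empty =>
        intro _
        have e : (fun a => if a ∈ insert i (∅ : Finset 𝒜) then δ else 0) = update (0 : 𝒜 → ℝ) i δ := by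
          ext a
          by_cases ha : a = i
          · subst ha; simp
          · simp [ha]
        rw [e]
        have := (h.upd_strictMono 0 i).monotone (show δ ≤ C * δ by nlinarith)
        simpa using this
      | insert j S hj ih =>
        intro hi
        have hji : j ≠ i := fun hc => hi (by simp [hc])
        have hiS : i ∉ S := fun hc => hi (by simp [hc])
        have ih := ih hiS
        set x : 𝒜 → ℝ := fun a => if a ∈ insert i S then δ else 0 with hx
        have e : (fun a => if a ∈ insert i (insert j S) then δ else 0) = update x j δ := by
          ext a
          by_cases ha : a = j
          · subst ha; simp
          · simp [hx, ha]
        have hxj : x j = 0 := by simp [hx, hji, hj]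
        have hx0 : 0 ≤ U x := by
          rw [← h0]; refine h.mono fun a => ?_
          simp only [hx, Pi.zero_apply]; split_ifs <;> linarith
        have hx1 : U x ≤ δ := by
          have := h.const δ
          rw [h0, zero_add] at this
          rw [← this]; refine h.mono fun a => ?_
          simp only [hx]; split_ifs <;> linarith
        have := step δ hδ hle j hji x hxj hx0 (by linarith)
        rw [e, Finset.insert_comm, Finset.card_insert_of_notMem (by simp [hji, hj])]
        push_cast
        linarith
    have := key (Finset.univ.erase i) (by simp)
    rw [Finset.insert_erase (Finset.mem_univ i)] at this
    simp only [Finset.mem_univ, if_true, Finset.card_univ] at this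
    rw [h.const, h0, zero_add] at this
    exact this
  -- hence the derivative at the origin is bounded below
  have hp' : HasDerivAt (fun δ => U (update 0 i (C * δ))) (p * C) 0 := by
    have h2 : HasDerivAt (fun δ => C * δ) C 0 := by
      simpa using (hasDerivAt_id (0 : ℝ)).const_mul C
    unfold PD at hp
    exact HasDerivAt.comp (0 : ℝ) (h₂ := fun ξ => U (update 0 i ξ)) (by simpa using hp) h2
  have hsl := (hasDerivAt_iff_tendsto_slope.1 hp').mono_left
    (show 𝓝[>] (0 : ℝ) ≤ 𝓝[≠] 0 from nhdsWithin_mono 0 fun x hx => ne_of_gt hx)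
  have hn : (0 : ℝ) < Fintype.card 𝒜 := by exact_mod_cast (by omega : 0 < Fintype.card 𝒜)
  have hlow : 1 / (Fintype.card 𝒜 : ℝ) ≤ p * C := by
    refine ge_of_tendsto hsl ?_
    filter_upwards [hC, self_mem_nhdsWithin,
      nhdsWithin_le_nhds (gt_mem_nhds (show (0 : ℝ) < ε / 2 by linarith))] with δ hδ hδ0 hδε
    have hδ0 : 0 < δ := hδ0
    have := total δ hδ0 hδε hδ
    rw [slope_def_field]
    simp only [mul_zero, sub_zero]
    rw [upd_zero, h0, sub_zero, div_le_div_iff₀ hn hδ0]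
    linarith
  have : 0 < p * C := lt_of_lt_of_le (by positivity) hlow
  exact pos_of_mul_pos_left this (by linarith)

end Agg

/-! ### Existence of partial derivatives -/

namespace Agg

variable {𝒜 : Type*} [Fintype 𝒜] [DecidableEq 𝒜] {U : (𝒜 → ℝ) → ℝ}

lemma pd_shift {𝒜 : Type*} [DecidableEq 𝒜] {U : (𝒜 → ℝ) → ℝ}
    (x₀ x : 𝒜 → ℝ) (i : 𝒜) (p : ℝ) :
    PD (fun x => U (fun a => x a + x₀ a) - U x₀) i x p ↔ PD U i (fun a => x a + x₀ a) p := by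
  have e : (fun ξ => U (fun a => update x i ξ a + x₀ a) - U x₀) =
      fun ξ => U (update (fun a => x a + x₀ a) i (ξ + x₀ i)) - U x₀ := by
    ext ξ
    congr 2
    ext b
    by_cases hb : b = i
    · subst hb; simp
    · simp [hb]
  unfold PD
  rw [e, hasDerivAt_sub_const_iff]
  constructor
  · intro hd
    have := HasDerivAt.comp_sub_const (x i + x₀ i) (x₀ i)
      (f := fun ξ => U (update (fun a => x a + x₀ a) i (ξ + x₀ i))) (f' := p) (by simpa using hd)
    simpa using this
  · intro hd
    exact HasDerivAt.comp_add_const (x i) (x₀ i)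
      (f := fun ξ => U (update (fun a => x a + x₀ a) i ξ)) (f' := p) hd

lemma pd_pos (h : Agg U) (hcard : 2 < Fintype.card 𝒜) {i : 𝒜} {x : 𝒜 → ℝ} {p : ℝ}
    (hp : PD U i x p) : 0 < p := by
  refine (h.shift x).pd_pos_zero hcard (by simp) (i := i) ?_
  rw [pd_shift]
  simpa using hp

/-- The map `ξ ↦ ξ - U (ξ e_i)` is `1`-Lipschitz. Its value determines the partial derivative in
direction `i`. -/
lemma level_lipschitz (h : Agg U) (i : 𝒜) : LipschitzWith 1 fun ξ => ξ - U (update 0 i ξ) := by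
  refine LipschitzWith.of_le_add fun ξ η => ?_
  rcases le_total ξ η with hle | hle
  · have := h.upd_le 0 i hle
    have hd : 0 ≤ dist ξ η := dist_nonneg
    linarith
  · have := (h.upd_strictMono 0 i).monotone hle
    rw [Real.dist_eq, abs_of_nonneg (by linarith)]
    linarith

/-- At points of level `0` near the origin, the partial derivative in direction `j` exists for
almost every value of the `j`-th coordinate. -/
lemma pd_exists_ae (h : Agg U) (hcard : 2 < Fintype.card 𝒜) (h0 : U 0 = 0) (j : 𝒜) :
    ∃ N : Set ℝ, MeasureTheory.volume N = 0 ∧ ∃ η > 0, ∀ t ∉ N, |t| < η →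
      ∀ v : 𝒜 → ℝ, v j = t → U v = 0 → ∃ q, PD U j v q := by
  obtain ⟨l, hl, -⟩ := exists_third hcard j j
  set g : ℝ → ℝ := fun ξ => U (update 0 j ξ) with hg
  set σ : ℝ → ℝ := fun ξ => ξ - g ξ with hσ
  have hσL : LipschitzWith 1 σ := h.level_lipschitz j
  set B : Set ℝ := {ξ | ¬ DifferentiableAt ℝ g ξ} with hB
  have hB0 : MeasureTheory.volume B = 0 :=
    (h.upd_lipschitz 0 j).ae_differentiableAt_real
  have s1 : 0 < σ 1 := by
    have := h.strict (update 0 j 1) l 1 (by simp [hl])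
    have h2 : U (update (update 0 j 1) l 1) ≤ U (fun _ => 1) := by
      refine h.mono fun a => ?_
      simp only [update_apply, Pi.zero_apply]
      split_ifs <;> norm_num
    rw [h.const, h0] at h2
    simp only [hσ, hg]
    linarith
  have s2 : σ (-1) < 0 := by
    have := h.strict (fun _ => -1) l 0 (by norm_num)
    have h2 : U (update (fun _ => -1) l 0) ≤ U (update 0 j (-1)) := by
      refine h.mono fun a => ?_
      by_cases hal : a = l
      · subst hal; simp [hl]
      · by_cases haj : a = j
        · subst haj; simp [hal]
        · simp [hal, haj]
    rw [h.const, h0] at this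
    simp only [hσ, hg]
    linarith
  refine ⟨σ '' B, ?_, min (σ 1) (-σ (-1)), lt_min s1 (by linarith), ?_⟩
  · have := hσL.lipschitzOnWith (s := B) |>.hausdorffMeasure_image_le (zero_le_one)
    rw [MeasureTheory.hausdorffMeasure_real, hB0] at this
    simpa using this
  · intro t ht htη v hvj hvU
    have ht1 := abs_lt.1 (htη.trans_le (min_le_left _ _))
    have ht2 := abs_lt.1 (htη.trans_le (min_le_right _ _))
    obtain ⟨ξ, -, hξ⟩ := intermediate_value_Icc (show (-1 : ℝ) ≤ 1 by norm_num)
      hσL.continuous.continuousOn (show t ∈ Set.Icc (σ (-1)) (σ 1) from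
        ⟨by linarith, by linarith⟩)
    have hd : DifferentiableAt ℝ g ξ := by
      by_contra hc
      exact ht ⟨ξ, hc, hξ⟩
    refine ⟨deriv g ξ, PD.congr' h (x := update 0 j ξ) ?_ ?_⟩
    · unfold PD
      simp only [update_idem, update_self]
      exact hd.hasDerivAt
    · rw [hvU, hvj, ← hξ]
      simp [hσ, hg]

/-- All partial derivatives exist at the origin: one transports a derivative in direction `i`
from a point of level `0` where it exists, with help of a coordinate `j` whose derivatives exist at
both ends. -/
lemma pd_exists_zero (h : Agg U) (hcard : 2 < Fintype.card 𝒜) (h0 : U 0 = 0) (i : 𝒜) :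
    ∃ p, PD U i 0 p := by
  obtain ⟨j, hji, -⟩ := exists_third hcard i i
  obtain ⟨l, hli, hlj⟩ := exists_third hcard i j
  obtain ⟨ε, hε, H⟩ := h.realize h0 hli.symm hlj.symm
  obtain ⟨N, hN, η, hη, HN⟩ := h.pd_exists_ae hcard h0 j
  set m := min ε η with hm
  have hm0 : 0 < m := lt_min hε hη
  have hmε : m ≤ ε := min_le_left _ _
  have hmη : m ≤ η := min_le_right _ _
  have hcont := (h.level_lipschitz i).continuous
  have ev : ∀ᶠ ξ in 𝓝 (0 : ℝ), |ξ - U (update 0 i ξ)| < m / 2 :=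
    (hcont.abs.tendsto 0).eventually (gt_mem_nhds
      (show |(0 : ℝ) - U (update 0 i 0)| < m / 2 by rw [upd_zero, h0]; simpa using hm0))
  obtain ⟨r, hr, Hr⟩ := Metric.eventually_nhds_iff.1 ev
  obtain ⟨ξ, hξ, q₀, hq₀, hdq⟩ := exists_deriv_pos (h.upd_strictMono 0 i) (h.upd_lipschitz 0 i)
    (show (0 : ℝ) < r / 2 by linarith)
  have hs := @Hr ξ (by
    rw [Real.dist_eq, sub_zero, abs_of_nonneg hξ.1]; linarith [hξ.2])
  set s : ℝ := ξ - U (update 0 i ξ) with hs_def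
  -- a value `t` at which both derivatives in direction `j` exist
  obtain ⟨t, htm, htN, htN'⟩ : ∃ t, |t| < m / 2 ∧ t ∉ N ∧ t - s ∉ N := by
    by_contra! hc
    have hsub : Metric.ball (0 : ℝ) (m / 2) ⊆ N ∪ (fun t => t - s) ⁻¹' N := by
      intro t ht
      rw [Metric.mem_ball, Real.dist_eq, sub_zero] at ht
      by_cases htN : t ∈ N
      · exact Or.inl htN
      · exact Or.inr (hc t ht htN)
    have hnull : MeasureTheory.volume (N ∪ (fun t => t - s) ⁻¹' N) = 0 :=
      MeasureTheory.measure_union_null hN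
        ((MeasureTheory.measurePreserving_sub_right MeasureTheory.volume
          s).quasiMeasurePreserving.preimage_null hN)
    have hb : 0 < MeasureTheory.volume (Metric.ball (0 : ℝ) (m / 2)) :=
      Metric.measure_ball_pos _ _ (by linarith)
    exact absurd (MeasureTheory.measure_mono_null hsub hnull) hb.ne'
  have hts : |t - s| < m := lt_of_le_of_lt (abs_sub t s) (by linarith)
  obtain ⟨y, hy⟩ := H s t (by linarith) (by linarith)
  obtain ⟨z, hz⟩ := H 0 (t - s) (by simpa using hε) (by linarith)
  obtain ⟨q, hq⟩ := HN t htN (by linarith) (tri i j s t y) (by simp [tri, hji]) hy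
  obtain ⟨q', hq'⟩ := HN (t - s) htN' (by linarith) (tri i j 0 (t - s) z) (by simp [tri, hji]) hz
  have hi : PD U i (tri i j s t y) q₀ := by
    refine PD.congr' h (x := update 0 i ξ) (by unfold PD; simpa using hdq) ?_
    rw [hy]; simp [tri, hs_def]
  have := PD.exchange h hji.symm (x' := fun a => tri i j 0 (t - s) z a + s) (by simp [tri])
    (by simp [tri, hji]) hi hq (PD.tr h hq' s) (h.pd_pos hcard hq)
  refine ⟨_, PD.congr' h this ?_⟩
  rw [h.tr, hz, h0]; simp [tri]

lemma pd_exists (h : Agg U) (hcard : 2 < Fintype.card 𝒜) (i : 𝒜) (x : 𝒜 → ℝ) :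
    ∃ p, PD U i x p := by
  obtain ⟨p, hp⟩ := (h.shift x).pd_exists_zero hcard (by simp) i
  rw [pd_shift] at hp
  exact ⟨p, by simpa using hp⟩

end Agg

/-! ### The functional equation for the partial derivatives -/

/-- A solution of `ρ (a + b) ρ 0 = ρ a ρ b` that is bounded near `0` is an exponential. -/
lemma exp_of_mul {ρ : ℝ → ℝ} (hpos : ∀ t, 0 < ρ t)
    (hmul : ∀ a b, ρ (a + b) * ρ 0 = ρ a * ρ b) {ε M : ℝ} (hε : 0 < ε)
    (hM : ∀ d, |d| < ε → ρ d ≤ M) : ∃ k, ∀ t, ρ t = ρ 0 * Real.exp (-k * t) := by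
  let ℓ : ℝ →+ ℝ :=
    { toFun := fun t => Real.log (ρ t) - Real.log (ρ 0)
      map_zero' := by simp
      map_add' := fun a b => by
        have := congrArg Real.log (hmul a b)
        rw [Real.log_mul (hpos _).ne' (hpos _).ne', Real.log_mul (hpos _).ne' (hpos _).ne'] at this
        linarith }
  have hℓ : ∀ t, ℓ t = Real.log (ρ t) - Real.log (ρ 0) := fun t => rfl
  have hup : ∀ d, |d| < ε → ℓ d ≤ Real.log M - Real.log (ρ 0) := by
    intro d hd
    rw [hℓ]
    have := Real.log_le_log (hpos d) (hM d hd)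
    linarith
  have hcont : Continuous ℓ := by
    refine ℓ.continuous_of_isBounded_nhds_zero (Metric.ball_mem_nhds 0 hε) ?_
    refine (Metric.isBounded_Icc (-(Real.log M - Real.log (ρ 0)))
      (Real.log M - Real.log (ρ 0))).subset ?_
    rintro _ ⟨d, hd, rfl⟩
    rw [Metric.mem_ball, Real.dist_eq, sub_zero] at hd
    have h1 := hup d hd
    have h2 := hup (-d) (by rwa [abs_neg])
    rw [map_neg] at h2
    exact ⟨by linarith, h1⟩
  refine ⟨-ℓ 1, fun t => ?_⟩
  have hlin : ℓ t = t * ℓ 1 := by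
    have := (ℓ.toRealLinearMap hcont).map_smul t 1
    simpa using this
  rw [neg_neg, mul_comm (ℓ 1), ← hlin, hℓ, Real.exp_sub, Real.exp_log (hpos _),
    Real.exp_log (hpos _), mul_div_cancel₀ _ (hpos 0).ne']

namespace Agg

variable {𝒜 : Type*} [Fintype 𝒜] [DecidableEq 𝒜] {U : (𝒜 → ℝ) → ℝ}
  {p : 𝒜 → (𝒜 → ℝ) → ℝ}

lemma p_level (h : Agg U) (hp : ∀ i x, PD U i x (p i x)) {i : 𝒜} {x x' : 𝒜 → ℝ}
    (hi : x i - U x = x' i - U x') : p i x = p i x' :=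
  (PD.congr' h (hp i x) hi).unique (hp i x')

lemma p_match (h : Agg U) (hcard : 2 < Fintype.card 𝒜) (hp : ∀ i x, PD U i x (p i x)) {i j : 𝒜}
    (hij : i ≠ j) {x x' : 𝒜 → ℝ} (hi : x i = x' i) (hj : x j = x' j) :
    p i x * p j x' = p i x' * p j x := by
  have h1 := h.pd_pos hcard (hp j x)
  have := (PD.exchange h hij hi hj (hp i x) (hp j x) (hp j x') h1).unique (hp i x')
  rw [← this]
  field_simp

lemma p_le_one (h : Agg U) (hp : ∀ i x, PD U i x (p i x)) (i : 𝒜) (x : 𝒜 → ℝ) : p i x ≤ 1 := by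
  have h1 : HasDerivAt (fun ξ => U (update x i ξ)) (p i x) (x i) := hp i x
  have h2 := norm_deriv_le_of_lipschitz (x₀ := x i) (h.upd_lipschitz x i)
  rw [h1.deriv] at h2
  simpa using (le_abs_self _).trans h2

/-- The ratio of the `i`-th and `j`-th partial derivatives when `x i - x j = t`. -/
noncomputable def ratio (p : 𝒜 → (𝒜 → ℝ) → ℝ) (i j : 𝒜) (t : ℝ) : ℝ :=
  p i (update 0 i t) / p j (update 0 i t)

lemma p_ratio (h : Agg U) (hcard : 2 < Fintype.card 𝒜) (hp : ∀ i x, PD U i x (p i x)) {i j : 𝒜}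
    (hij : i ≠ j) (x : 𝒜 → ℝ) : p i x = ratio p i j (x i - x j) * p j x := by
  set y : 𝒜 → ℝ := update 0 i (x i - x j) with hy
  have hlev : ∀ a, p a (fun b => y b + x j) = p a y := by
    intro a
    refine h.p_level hp ?_
    rw [h.tr]; ring
  have := h.p_match hcard hp hij (x := x) (x' := fun b => y b + x j) (by simp [hy])
    (by simp [hy, hij.symm])
  rw [hlev, hlev] at this
  have h1 := h.pd_pos hcard (hp j y)
  simp only [ratio, ← hy]
  field_simp
  linarith

lemma ratio_pos (h : Agg U) (hcard : 2 < Fintype.card 𝒜) (hp : ∀ i x, PD U i x (p i x)) (i j : 𝒜)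
    (t : ℝ) : 0 < ratio p i j t :=
  div_pos (h.pd_pos hcard (hp _ _)) (h.pd_pos hcard (hp _ _))

lemma ratio_cocycle (h : Agg U) (hcard : 2 < Fintype.card 𝒜) (hp : ∀ i x, PD U i x (p i x))
    {i j l : 𝒜} (hij : i ≠ j) (hil : i ≠ l) (hjl : j ≠ l) (a b : ℝ) :
    ratio p i l (a + b) = ratio p i j a * ratio p j l b := by
  set x : 𝒜 → ℝ := update (update 0 i (a + b)) j b with hx
  have hxi : x i = a + b := by simp [hx, hij]
  have hxj : x j = b := by simp [hx]
  have hxl : x l = 0 := by simp [hx, hil.symm, hjl.symm]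
  have e1 := h.p_ratio hcard hp hij x
  have e2 := h.p_ratio hcard hp hil x
  have e3 := h.p_ratio hcard hp hjl x
  rw [hxi, hxj, add_sub_cancel_right] at e1
  rw [hxi, hxl, sub_zero] at e2
  rw [hxj, hxl, sub_zero] at e3
  rw [e1, e3, ← mul_assoc] at e2
  exact (mul_right_cancel₀ (h.pd_pos hcard (hp l x)).ne' e2).symm

lemma ratio_exp (h : Agg U) (hcard : 2 < Fintype.card 𝒜) (h0 : U 0 = 0)
    (hp : ∀ i x, PD U i x (p i x)) {i j : 𝒜} (hij : i ≠ j) :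
    ∃ k, ∀ t, ratio p i j t = ratio p i j 0 * Real.exp (-k * t) := by
  obtain ⟨l, hli, hlj⟩ := exists_third hcard i j
  obtain ⟨ε, hε, H⟩ := h.realize h0 hli.symm hlj.symm
  refine exp_of_mul (h.ratio_pos hcard hp i j) ?_ hε (M := 1 / p j 0) ?_
  · intro a b
    have e1 := h.ratio_cocycle hcard hp hij hli.symm hlj.symm a b
    have e2 := h.ratio_cocycle hcard hp hij hli.symm hlj.symm (a + b) 0
    have e3 := h.ratio_cocycle hcard hp hij hli.symm hlj.symm 0 b
    have e4 := h.ratio_cocycle hcard hp hij hli.symm hlj.symm b 0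
    rw [add_zero] at e2 e4
    rw [zero_add] at e3
    have hne := (h.ratio_pos hcard hp j l 0).ne'
    refine mul_right_cancel₀ hne ?_
    calc ratio p i j (a + b) * ratio p i j 0 * ratio p j l 0
        = (ratio p i j (a + b) * ratio p j l 0) * ratio p i j 0 := by ring
      _ = ratio p i j a * (ratio p i j 0 * ratio p j l b) := by rw [← e2, e1]; ring
      _ = ratio p i j a * ratio p i j b * ratio p j l 0 := by rw [← e3, e4]; ring
  · intro d hd
    obtain ⟨y, hy⟩ := H d 0 hd (by simpa using hε)
    have e := h.p_ratio hcard hp hij (tri i j d 0 y)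
    have e2 : p j (tri i j d 0 y) = p j 0 := by
      refine h.p_level hp ?_
      rw [hy, h0]; simp [tri, hij.symm]
    have e3 : tri i j d 0 y i - tri i j d 0 y j = d := by simp [tri, hij.symm]
    rw [e2, e3] at e
    rw [le_div_iff₀ (h.pd_pos hcard (hp j 0)), ← e]
    exact h.p_le_one hp _ _

/-- The rate of decay of `ratio p i j` does not depend on `j`. -/
lemma ratio_exp' (h : Agg U) (hcard : 2 < Fintype.card 𝒜) (h0 : U 0 = 0)
    (hp : ∀ i x, PD U i x (p i x)) (i : 𝒜) :
    ∃ k, ∀ j, i ≠ j → ∀ t, ratio p i j t = ratio p i j 0 * Real.exp (-k * t) := by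
  obtain ⟨j, hji, -⟩ := exists_third hcard i i
  obtain ⟨k, hk⟩ := h.ratio_exp hcard h0 hp hji.symm
  refine ⟨k, fun l hil t => ?_⟩
  by_cases hjl : j = l
  · subst hjl; exact hk t
  have e1 := h.ratio_cocycle hcard hp hji.symm hil hjl t 0
  have e2 := h.ratio_cocycle hcard hp hji.symm hil hjl 0 0
  rw [add_zero] at e1 e2
  rw [e1, e2, hk t]
  ring

/-- The partial derivatives in direction `i` are `p i 0 * e^{-k (x i - U x)}`. The points `x` and
`(U x, …, U x)` of the same level are joined by a chain of points of that level in which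
consecutive ones share a coordinate. -/
lemma p_formula (h : Agg U) (hcard : 2 < Fintype.card 𝒜) (h0 : U 0 = 0)
    (hp : ∀ i x, PD U i x (p i x)) (i : 𝒜) :
    ∃ k, ∀ x, p i x = p i 0 * Real.exp (-k * (x i - U x)) := by
  obtain ⟨k, hk⟩ := h.ratio_exp' hcard h0 hp i
  refine ⟨k, fun x => ?_⟩
  obtain ⟨j, hji, -⟩ := exists_third hcard i i
  obtain ⟨l, hli, hlj⟩ := exists_third hcard i j
  have share : ∀ (y y' : 𝒜 → ℝ) (m : 𝒜), i ≠ m → U y = U y' → y m = y' m →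
      p i y * Real.exp (k * y i) = p i y' * Real.exp (k * y' i) := by
    intro y y' m him hU hm
    have key : ∀ z : 𝒜 → ℝ,
        p i z * Real.exp (k * z i) = ratio p i m 0 * Real.exp (k * z m) * p m z := by
      intro z
      rw [h.p_ratio hcard hp him z, hk m him]
      have : Real.exp (-k * (z i - z m)) * Real.exp (k * z i) = Real.exp (k * z m) := by
        rw [← Real.exp_add]; congr 1; ring
      rw [← this]; ring
    rw [key, key, h.p_level hp (x := y) (x' := y') (by rw [hU, hm]), hm]
  set u := U x with hu
  have hconst : U (fun _ => u) = u := by rw [h.const, h0, zero_add]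
  obtain ⟨y, hy⟩ : ∃ y, U (tri i i (x i) 0 y) = u := by
    have c : Continuous fun y => U (tri i i (x i) 0 y) := by
      refine h.continuous.comp (continuous_pi fun a => ?_)
      simp only [tri]; split_ifs <;> fun_prop
    have hx : ∀ a, -‖x‖ ≤ x a ∧ x a ≤ ‖x‖ := fun a => abs_le.1 (norm_le_pi_norm x a)
    have hmem : u ∈ Set.Icc (U (tri i i (x i) 0 (-‖x‖))) (U (tri i i (x i) 0 ‖x‖)) := by
      refine ⟨h.mono fun a => ?_, h.mono fun a => ?_⟩
      · by_cases ha : a = i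
        · subst ha; simp [tri]
        · simp [tri, ha, (hx a).1]
      · by_cases ha : a = i
        · subst ha; simp [tri]
        · simp [tri, ha, (hx a).2]
    obtain ⟨y, -, hy⟩ := intermediate_value_Icc
      (show -‖x‖ ≤ ‖x‖ by linarith [norm_nonneg x]) c.continuousOn hmem
    exact ⟨y, hy⟩
  obtain ⟨s, hs⟩ : ∃ s, U (tri i j s y u) = u := by
    have c : Continuous fun s => U (tri i j s y u) := by
      refine h.continuous.comp (continuous_pi fun a => ?_)
      simp only [tri]; split_ifs <;> fun_prop
    have hmem : u ∈ Set.uIcc (U (tri i j (x i) y u)) (U (tri i j u y u)) := by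
      rw [Set.mem_uIcc]
      rcases le_total u y with huy | huy
      · refine Or.inl ⟨(h.mono fun a => ?_).trans hy.le, hconst.ge.trans (h.mono fun a => ?_)⟩
        · simp only [tri]; split_ifs <;> simp [huy]
        · simp only [tri]; split_ifs <;> simp [huy]
      · refine Or.inr ⟨(h.mono fun a => ?_).trans hconst.le, hy.ge.trans (h.mono fun a => ?_)⟩
        · simp only [tri]; split_ifs <;> simp [huy]
        · simp only [tri]; split_ifs <;> simp [huy]
    obtain ⟨s, -, hs⟩ := intermediate_value_uIcc (a := x i) (b := u)
      (f := fun s => U (tri i j s y u)) c.continuousOn hmem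
    exact ⟨s, hs⟩
  have s0 : p i x = p i (tri i i (x i) 0 y) := h.p_level hp (by rw [hy]; simp [tri, hu])
  have s1 := share (tri i i (x i) 0 y) (tri i j s y u) j hji.symm (by rw [hy, hs])
    (by simp [tri, hji])
  have s2 := share (tri i j s y u) (fun _ => u) l hli.symm (by rw [hs, hconst])
    (by simp [tri, hli, hlj])
  have s3 : p i (fun _ => u) = p i 0 := h.p_level hp (by rw [hconst, h0]; simp)
  have e1 : tri i i (x i) 0 y i = x i := by simp [tri]
  have s4 := s1.trans s2
  rw [← s0, s3, e1] at s4
  have e2 : Real.exp (-k * (x i - u)) * Real.exp (k * x i) = Real.exp (k * u) := by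
    rw [← Real.exp_add]; congr 1; ring
  refine mul_right_cancel₀ (Real.exp_pos (k * x i)).ne' ?_
  rw [s4, mul_assoc, e2]

/-- The rate `k` is the same for all assets. -/
lemma pd_formula (h : Agg U) (hcard : 2 < Fintype.card 𝒜) (h0 : U 0 = 0) :
    ∃ (k : ℝ) (C : 𝒜 → ℝ), (∀ i, 0 < C i) ∧
      ∀ i x, PD U i x (C i * Real.exp (-k * (x i - U x))) := by
  choose p hp using h.pd_exists hcard
  choose k hk using h.p_formula hcard h0 hp
  have hkk : ∀ i j, k i = k j := by
    intro i j
    by_cases hij : i = j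
    · rw [hij]
    obtain ⟨l, hli, hlj⟩ := exists_third hcard i j
    have hm := h.p_match hcard hp hij (x := 0) (x' := update 0 l 1) (by simp [hli.symm])
      (by simp [hlj.symm])
    have hU : 0 < U (update 0 l 1) := by
      have := h.strict 0 l 1 (by simp)
      rwa [h0] at this
    set u := U (update 0 l 1)
    have ei := hk i (update 0 l 1)
    have ej := hk j (update 0 l 1)
    rw [update_of_ne hli.symm] at ei
    rw [update_of_ne hlj.symm] at ej
    rw [ei, ej] at hm
    have h1 := h.pd_pos hcard (hp i 0)
    have h2 := h.pd_pos hcard (hp j 0)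
    have : Real.exp (-k j * (0 - u)) = Real.exp (-k i * (0 - u)) := by
      refine mul_left_cancel₀ (mul_pos h1 h2).ne' ?_
      linear_combination hm
    have := Real.exp_injective this
    have : (k j - k i) * u = 0 := by linarith
    rcases mul_eq_zero.1 this with h' | h'
    · linarith
    · linarith
  obtain ⟨i₀⟩ : Nonempty 𝒜 := Fintype.card_pos_iff.1 (by omega)
  refine ⟨k i₀, fun i => p i 0, fun i => h.pd_pos hcard (hp i 0), fun i x => ?_⟩
  rw [hkk i₀ i, ← hk i x]
  exact hp i x

end Agg

/-! ### Integration -/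

/-- A function invariant under changes of a single coordinate is constant. -/
lemma const_of_update {𝒜 : Type*} [Fintype 𝒜] [DecidableEq 𝒜] (F : (𝒜 → ℝ) → ℝ)
    (h : ∀ x i t, F (update x i t) = F x) (x y : 𝒜 → ℝ) : F x = F y := by
  have key : ∀ x y : 𝒜 → ℝ, x ≤ y → F x = F y := by
    intro x y hxy
    refine le_antisymm (mono_of_update (fun _ => True) F (fun x i t _ _ _ => (h x i t).ge)
      (fun _ => trivial) (fun _ => trivial) hxy) ?_
    have := mono_of_update (fun _ => True) (fun z => -F z)
      (fun x i t _ _ _ => by rw [h x i t]) (fun _ => trivial) (fun _ => trivial) hxy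
    linarith
  exact (key x (x ⊔ y) le_sup_left).trans (key y (x ⊔ y) le_sup_right).symm

/-- A function whose partial derivatives are those of `∑ j, φ j (x j)` differs from it by a
constant. -/
lemma separable {𝒜 : Type*} [Fintype 𝒜] [DecidableEq 𝒜] (V : (𝒜 → ℝ) → ℝ) (φ : 𝒜 → ℝ → ℝ)
    (h : ∀ (x : 𝒜 → ℝ) (i : 𝒜), ∃ d, HasDerivAt (fun ξ => V (update x i ξ)) d (x i) ∧
      HasDerivAt (φ i) d (x i)) (x : 𝒜 → ℝ) :
    V x - ∑ j, φ j (x j) = V 0 - ∑ j, φ j 0 := by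
  refine const_of_update (fun x => V x - ∑ j, φ j (x j)) (fun x i t => ?_) x 0
  have hd : ∀ s, HasDerivAt (fun ξ => V (update x i ξ) - ∑ j, φ j (update x i ξ j)) 0 s := by
    intro s
    obtain ⟨d, h1, h2⟩ := h (update x i s) i
    simp only [update_idem, update_self] at h1 h2
    have h3 : HasDerivAt (fun ξ => ∑ j, φ j (update x i ξ j)) (∑ j, if j = i then d else 0) s := by
      refine HasDerivAt.fun_sum fun j _ => ?_
      by_cases hj : j = i
      · subst hj; simpa using h2
      · simpa [hj] using hasDerivAt_const s (φ j (x j))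
    have := h1.fun_sub h3
    simpa using this
  have := is_const_of_deriv_eq_zero (fun s => (hd s).differentiableAt) (fun s => (hd s).deriv)
    t (x i)
  simpa using this

namespace Agg

variable {𝒜 : Type*} [Fintype 𝒜] [DecidableEq 𝒜] {U : (𝒜 → ℝ) → ℝ}

/-- The classification of indifference indices. -/
lemma classify (h : Agg U) (hcard : 2 < Fintype.card 𝒜) (h0 : U 0 = 0) :
    (∃ (b : ℝ) (c : 𝒜 → ℝ), b ≠ 0 ∧ ∀ x, U x = LMSR b c x) ∨
      (∃ c : 𝒜 → ℝ, (∀ a, 0 < c a) ∧ ∀ x, U x = ConstSum c x) := by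
  obtain ⟨k, C, hC, hd⟩ := h.pd_formula hcard h0
  by_cases hk : k = 0
  · refine Or.inr ⟨C, hC, fun x => ?_⟩
    have := separable U (fun i s => C i * s) (fun x i => ⟨C i, ?_, ?_⟩) x
    · simp only [h0, mul_zero, Finset.sum_const_zero, sub_zero] at this
      rw [ConstSum]; linarith
    · simpa [PD, hk] using hd i x
    · simpa using (hasDerivAt_id (x i)).const_mul (C i)
  · have key : ∀ x, Real.exp (-k * U x) - ∑ j, C j * Real.exp (-k * x j) = 1 - ∑ j, C j := by
      intro x
      have := separable (fun x => Real.exp (-k * U x)) (fun i s => C i * Real.exp (-k * s))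
        (fun x i => ⟨C i * (Real.exp (-k * x i) * -k), ?_, ?_⟩) x
      · simpa [h0] using this
      · have h1 : HasDerivAt (fun ξ => U (update x i ξ)) _ (x i) := hd i x
        convert (h1.const_mul (-k)).exp using 1
        rw [update_eq_self]
        have : Real.exp (-k * x i) = Real.exp (-k * U x) * Real.exp (-k * (x i - U x)) := by
          rw [← Real.exp_add]; congr 1; ring
        rw [this]; ring
      · have := (((hasDerivAt_id (x i)).const_mul (-k)).exp).const_mul (C i)
        simpa using this
    -- translating by `1` multiplies the left side by `e^{-k} ≠ 1`
    have hsum : 1 - ∑ j, C j = 0 := by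
      have := key (fun _ => 1)
      rw [h.const, h0, ← Finset.sum_mul] at this
      have hne : Real.exp (-k) - 1 ≠ 0 := by
        rw [sub_ne_zero, Ne, Real.exp_eq_one_iff]; simpa using hk
      refine (mul_eq_zero.1 (?_ : (Real.exp (-k) - 1) * (1 - ∑ j, C j) = 0)).resolve_left hne
      simp only [zero_add, mul_one] at this
      linear_combination this
    refine Or.inl ⟨1 / k, fun j => Real.log (C j) / k, by simpa using hk, fun x => ?_⟩
    have e : ∀ a, Real.exp ((Real.log (C a) / k - x a) / (1 / k)) = C a * Real.exp (-k * x a) := by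
      intro a
      have : (Real.log (C a) / k - x a) / (1 / k) = Real.log (C a) + -k * x a := by
        field_simp; ring
      rw [this, Real.exp_add, Real.exp_log (hC a)]
    have hx := key x
    rw [hsum, sub_eq_zero] at hx
    simp only [LMSR, e, ← hx, Real.log_exp]
    field_simp

end Agg

/-! ### From a trading function to an indifference index -/

section Index

variable {𝒜 : Type*} [Fintype 𝒜] [DecidableEq 𝒜] {f : (𝒜 → ℝ) → ℝ}

lemma trading_mono (hf : IsTradingFunction f) {x y : 𝒜 → ℝ} (hx : PosInv x) (hy : PosInv y)
    (hxy : x ≤ y) : f x ≤ f y := by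
  refine mono_of_update (fun t => 0 < t) f (fun x i t hx _ hit => ?_) hx hy hxy
  rcases hit.eq_or_lt with h | h
  · rw [← h, update_eq_self]
  · exact (hf.strictMono x hx i t h).le

lemma trading_const_lt [Nonempty 𝒜] (hf : IsTradingFunction f) {s t : ℝ} (hs : 0 < s)
    (hst : s < t) : f (fun _ => s) < f (fun _ => t) := by
  obtain ⟨i⟩ := ‹Nonempty 𝒜›
  have ht : 0 < t := hs.trans hst
  refine (hf.strictMono (fun _ => s) (fun _ => hs) i t hst).trans_le
    (trading_mono hf (fun a => ?_) (fun _ => ht) fun a => ?_)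
  · rw [update_apply]; split_ifs <;> assumption
  · rw [update_apply]; split_ifs
    exacts [le_rfl, hst.le]

lemma trading_const_lt_iff [Nonempty 𝒜] (hf : IsTradingFunction f) {s t : ℝ} (hs : 0 < s)
    (ht : 0 < t) : f (fun _ => s) < f (fun _ => t) ↔ s < t := by
  refine ⟨fun h => ?_, trading_const_lt hf hs⟩
  by_contra! hc
  exact absurd (trading_mono hf (fun _ => ht) (fun _ => hs) (fun _ => hc)) (not_le.2 h)

lemma trading_const_eq_iff [Nonempty 𝒜] (hf : IsTradingFunction f) {s t : ℝ} (hs : 0 < s)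
    (ht : 0 < t) : f (fun _ => s) = f (fun _ => t) ↔ s = t := by
  refine ⟨fun h => ?_, fun h => by rw [h]⟩
  rcases lt_trichotomy s t with h' | h' | h'
  · exact absurd h (trading_const_lt hf hs h').ne
  · exact h'
  · exact absurd h (trading_const_lt hf ht h').ne'

/-- Every positive inventory is equivalent to a diagonal one, by connectedness of an interval. -/
lemma exists_diag [Nonempty 𝒜] (hf : IsTradingFunction f) {x : 𝒜 → ℝ} (hx : PosInv x) :
    ∃ s, (∃ i, x i ≤ s) ∧ f (fun _ => s) = f x := by
  obtain ⟨i, hi⟩ := Finite.exists_min x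
  obtain ⟨j, hj⟩ := Finite.exists_max x
  have hx0 : NonnegInv x := fun a => (hx a).le
  have hc : Continuous fun s : ℝ => (fun _ : 𝒜 => s) := continuous_pi fun _ => continuous_id
  have c1 := (hf.closed_upper x hx0).preimage hc
  have c2 := (hf.closed_lower x hx0).preimage hc
  have hi0 := hx i
  have hcover : ∀ s ∈ Set.Icc (x i) (x j), s ∈ (fun (s : ℝ) (_ : 𝒜) => s) ⁻¹'
      {I | NonnegInv I ∧ f x ≤ f I} ∪ (fun (s : ℝ) (_ : 𝒜) => s) ⁻¹'
      {I | NonnegInv I ∧ f I ≤ f x} := by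
    intro s hs
    have hs0 : NonnegInv fun _ : 𝒜 => s := fun a => (hi0.trans_le hs.1).le
    exact (le_total (f x) (f fun _ => s)).imp (fun h => ⟨hs0, h⟩) (fun h => ⟨hs0, h⟩)
  obtain ⟨s, hs, h1, h2⟩ := isPreconnected_closed_iff.1 (isPreconnected_Icc (a := x i) (b := x j))
    _ _ c1 c2 hcover ⟨x j, Set.right_mem_Icc.2 (hi j), fun _ => (hx j).le,
      trading_mono hf hx (fun _ => hx j) hj⟩ ⟨x i, Set.left_mem_Icc.2 (hi j), fun _ => (hx i).le,
      trading_mono hf (fun _ => hx i) hx hi⟩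
  exact ⟨s, ⟨i, hs.1⟩, le_antisymm h2.2 h1.2⟩

/-- The number `u` such that `x` and `(u, …, u)` are equivalent once translated into the positive
orthant. -/
lemma exists_index [Nonempty 𝒜] (hf : IsTradingFunction f) (ht : TranslationInvariant f)
    (x : 𝒜 → ℝ) : ∃ u : ℝ, ∀ t, PosInv (fun a => x a + t) →
      0 < u + t ∧ f (fun _ => u + t) = f (fun a => x a + t) := by
  have hx0 : PosInv fun a => x a + (‖x‖ + 1) := fun a => by
    have := (abs_le.1 (norm_le_pi_norm x a)).1
    linarith
  set t₀ := ‖x‖ + 1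
  obtain ⟨s, ⟨i, hi⟩, hs⟩ := exists_diag hf hx0
  refine ⟨s - t₀, fun t hxt => ?_⟩
  have hpos : 0 < s - t₀ + t := by
    have := hxt i
    linarith
  refine ⟨hpos, ?_⟩
  have e1 : (fun _ : 𝒜 => s + (t - t₀)) = fun _ => s - t₀ + t := by ext; ring
  have e2 : (fun a : 𝒜 => x a + t₀ + (t - t₀)) = fun a => x a + t := by ext; ring
  have hs0 : 0 < s := (hx0 i).trans_le hi
  have := ht (fun _ => s) (fun a => x a + t₀) (t - t₀) (fun _ => hs0.le) (fun a => (hx0 a).le)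
    (by rw [e1]; exact fun _ => hpos.le) (by rw [e2]; exact fun a => (hxt a).le) hs
  rwa [e1, e2] at this

/-- A trading function satisfying independence and translation invariance is equivalent to the
restriction of an indifference index. -/
lemma exists_agg [Nonempty 𝒜] (hf : IsTradingFunction f) (hind : IndependentMM f)
    (ht : TranslationInvariant f) : ∃ U : (𝒜 → ℝ) → ℝ, Agg U ∧ U 0 = 0 ∧
      ∀ I J, NonnegInv I → NonnegInv J → (f I = f J ↔ U I = U J) := by
  choose U hU using exists_index hf ht
  have hlt : ∀ x y t, PosInv (fun a => x a + t) → PosInv (fun a => y a + t) →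
      (U x < U y ↔ f (fun a => x a + t) < f (fun a => y a + t)) := by
    intro x y t hx hy
    have h1 := hU x t hx
    have h2 := hU y t hy
    rw [← h1.2, ← h2.2, trading_const_lt_iff hf h1.1 h2.1, add_lt_add_iff_right]
  have heq : ∀ x y t, PosInv (fun a => x a + t) → PosInv (fun a => y a + t) →
      (U x = U y ↔ f (fun a => x a + t) = f (fun a => y a + t)) := by
    intro x y t hx hy
    have h1 := hU x t hx
    have h2 := hU y t hy
    rw [← h1.2, ← h2.2, trading_const_eq_iff hf h1.1 h2.1, add_left_inj]
  have hbig : ∀ (x : 𝒜 → ℝ) t, ‖x‖ < t → PosInv (fun a => x a + t) := fun x t hxt a => by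
    have := (abs_le.1 (norm_le_pi_norm x a)).1
    linarith
  refine ⟨U, ⟨?_, ?_, ?_⟩, ?_, ?_⟩
  · intro x i t hit
    set τ := ‖x‖ + ‖update x i t‖ + 1 with hτ
    have n1 := norm_nonneg x
    have n2 := norm_nonneg (update x i t)
    have hx := hbig x τ (by linarith)
    rw [hlt x (update x i t) τ hx (hbig _ τ (by linarith)), Agg.upd_add]
    exact hf.strictMono _ hx i _ (by linarith)
  · intro x c
    have hx := hbig x (‖x‖ + 1) (by linarith)
    set τ := ‖x‖ + 1
    have e : (fun a => x a + c + (τ - c)) = fun a => x a + τ := by ext; ring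
    have h1 := hU x τ hx
    have h2 := hU (fun a => x a + c) (τ - c) (by rw [e]; exact hx)
    rw [e, ← h1.2, trading_const_eq_iff hf h2.1 h1.1] at h2
    linarith [h2.2]
  · intro B x y
    set τ := ‖x‖ + ‖y‖ + 1 with hτ
    have n1 := norm_nonneg x
    have n2 := norm_nonneg y
    have hx := hbig x τ (by linarith)
    have hy := hbig y τ (by linarith)
    have e : ∀ x y : 𝒜 → ℝ, (fun a => mixInv B x y a + τ) =
        mixInv B (fun a => x a + τ) (fun a => y a + τ) := by
      intro x y; ext a; simp only [mixInv]; split_ifs <;> rfl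
    have hm : ∀ x y : 𝒜 → ℝ, PosInv (fun a => x a + τ) → PosInv (fun a => y a + τ) →
        PosInv (fun a => mixInv B x y a + τ) := by
      intro x y hx hy a
      simp only [mixInv]; split_ifs; exacts [hx a, hy a]
    rw [heq _ _ τ (hm x y hx hy) hy, heq _ _ τ hx (hm y x hy hx), e, e]
    exact hind B _ _ (fun a => (hx a).le) (fun a => (hy a).le)
  · have h1 := hU 0 1 (fun a => by simp)
    simp only [Pi.zero_apply, zero_add] at h1
    have := (trading_const_eq_iff hf h1.1 one_pos).1 h1.2
    linarith
  · intro I J hI hJ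
    have hp : ∀ I : 𝒜 → ℝ, NonnegInv I → PosInv (fun a => I a + 1) := fun I hI a => by
      have := hI a
      linarith
    have hn : ∀ I : 𝒜 → ℝ, NonnegInv I → NonnegInv (fun a => I a + 1) := fun I hI a =>
      (hp I hI a).le
    rw [heq I J 1 (hp I hI) (hp J hJ)]
    refine ⟨fun h => ht I J 1 hI hJ (hn I hI) (hn J hJ) h, fun h => ?_⟩
    have e : ∀ I : 𝒜 → ℝ, (fun a => I a + 1 + -1) = I := fun I => by ext; ring
    have := ht (fun a => I a + 1) (fun a => J a + 1) (-1) (hn I hI) (hn J hJ)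
      (by rw [e]; exact hI) (by rw [e]; exact hJ) h
    rwa [e, e] at this

end Index

/-! ### LMSR and constant sum market makers satisfy the axioms -/

section Converse

variable {𝒜 : Type*} [Fintype 𝒜] [DecidableEq 𝒜]

/-- If `f` is equivalent to a sum `∑ a, φ a (I a)`, it is independent. -/
lemma independent_of_sum {f : (𝒜 → ℝ) → ℝ} (φ : 𝒜 → ℝ → ℝ)
    (h : ∀ I J, NonnegInv I → NonnegInv J → (f I = f J ↔ ∑ a, φ a (I a) = ∑ a, φ a (J a))) :
    IndependentMM f := by
  intro B I J hI hJ
  have hm : ∀ I J : 𝒜 → ℝ, NonnegInv I → NonnegInv J → NonnegInv (mixInv B I J) := by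
    intro I J hI hJ a
    simp only [mixInv]; split_ifs; exacts [hI a, hJ a]
  rw [h _ _ (hm I J hI hJ) hJ, h _ _ hI (hm J I hJ hI)]
  have e : ∑ a, φ a (mixInv B I J a) + ∑ a, φ a (mixInv B J I a) =
      ∑ a, φ a (I a) + ∑ a, φ a (J a) := by
    rw [← Finset.sum_add_distrib, ← Finset.sum_add_distrib]
    refine Finset.sum_congr rfl fun a _ => ?_
    simp only [mixInv]; split_ifs
    · rfl
    · ring
  constructor <;> intro h' <;> linarith

lemma lmsr_eq_iff {𝒜 : Type*} [Fintype 𝒜] [Nonempty 𝒜] {b : ℝ} (hb : b ≠ 0) (c I J : 𝒜 → ℝ) :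
    LMSR b c I = LMSR b c J ↔
    ∑ a, Real.exp ((c a - I a) / b) = ∑ a, Real.exp ((c a - J a) / b) := by
  have hpos : ∀ I : 𝒜 → ℝ, 0 < ∑ a, Real.exp ((c a - I a) / b) := fun I =>
    Finset.sum_pos (fun a _ => Real.exp_pos _) Finset.univ_nonempty
  unfold LMSR
  rw [mul_right_inj' (neg_ne_zero.2 hb)]
  exact ⟨fun h' => Real.log_injOn_pos (hpos I) (hpos J) h', fun h' => by rw [h']⟩

lemma independent_translation_of_lmsr [Nonempty 𝒜] {f : (𝒜 → ℝ) → ℝ} {b : ℝ} {c : 𝒜 → ℝ} (hb : b ≠ 0)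
    (h : EquivMM f (LMSR b c)) : IndependentMM f ∧ TranslationInvariant f := by
  have h' : ∀ I J, NonnegInv I → NonnegInv J → (f I = f J ↔
      ∑ a, Real.exp ((c a - I a) / b) = ∑ a, Real.exp ((c a - J a) / b)) := fun I J hI hJ => by
    rw [h I J hI hJ, lmsr_eq_iff hb]
  refine ⟨independent_of_sum (fun a s => Real.exp ((c a - s) / b)) h', ?_⟩
  intro I J t hI hJ hIt hJt hfe
  rw [h' _ _ hI hJ] at hfe
  rw [h' _ _ hIt hJt]
  have e : ∀ I : 𝒜 → ℝ, ∑ a, Real.exp ((c a - (I a + t)) / b) =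
      Real.exp (-t / b) * ∑ a, Real.exp ((c a - I a) / b) := by
    intro I
    rw [Finset.mul_sum]
    refine Finset.sum_congr rfl fun a _ => ?_
    rw [← Real.exp_add]; congr 1; ring
  rw [e, e, hfe]

lemma independent_translation_of_constSum {f : (𝒜 → ℝ) → ℝ} {c : 𝒜 → ℝ} (h : EquivMM f (ConstSum c)) :
    IndependentMM f ∧ TranslationInvariant f := by
  refine ⟨independent_of_sum (fun a s => c a * s) h, ?_⟩
  intro I J t hI hJ hIt hJt hfe
  rw [h _ _ hI hJ] at hfe
  rw [h _ _ hIt hJt]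
  unfold ConstSum at *
  simp only [mul_add, Finset.sum_add_distrib, hfe]

end Converse

/-- Theorem 3: a trading function for more than two assets satisfies independence
and translation invariance iff it is equivalent to an LMSR market maker or to a
constant sum market maker. -/
theorem stmt6 {𝒜 : Type*} [Fintype 𝒜] [DecidableEq 𝒜] (hcard : 2 < Fintype.card 𝒜)
    (f : (𝒜 → ℝ) → ℝ) (hf : IsTradingFunction f) :
    (IndependentMM f ∧ TranslationInvariant f) ↔
      ((∃ (b : ℝ) (c : 𝒜 → ℝ), b ≠ 0 ∧ EquivMM f (LMSR b c)) ∨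
        (∃ c : 𝒜 → ℝ, (∀ a, 0 < c a) ∧ EquivMM f (ConstSum c))) := by
  have : Nonempty 𝒜 := Fintype.card_pos_iff.1 (by omega)
  constructor
  · rintro ⟨hind, ht⟩
    obtain ⟨U, hU, h0, hfU⟩ := exists_agg hf hind ht
    rcases hU.classify hcard h0 with ⟨b, c, hb, h⟩ | ⟨c, hc, h⟩
    · refine Or.inl ⟨b, c, hb, fun I J hI hJ => ?_⟩
      rw [hfU I J hI hJ, h, h]
    · refine Or.inr ⟨c, hc, fun I J hI hJ => ?_⟩
      rw [hfU I J hI hJ, h, h]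
  · rintro (⟨b, c, hb, h⟩ | ⟨c, -, h⟩)
    · exact independent_translation_of_lmsr hb h
    · exact independent_translation_of_constSum h
end

section
/- Let 𝒜 = {A, B} be a set of two assets. The constant product rule f_product is trader optimal within the class of scale-invariant, Liquidity Additive, symmetric, and sufficiently funded trading functions: for every trading function g satisfying scale invariance, Liquidity Additivity, symmetry, and sufficient funds, one has f_product ≿ g; moreover, both f_product ≿ g and g ≿ f_product hold if and only if g is equivalent to f_product. -/
/-!
The idea is that Liquidity Additivity makes trades add up, and that sufficient funds lets one
solve indifference equations downwards without ever exhausting an asset.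

Write `[a, b] ≡ [c, d]` for `g (b, c) = g (a, d)`.  For a symmetric `g` the Thomsen condition says
that `≡` is transitive along increasing chains of intervals (`Admissible.thomsen`).  By sufficient
funds, for `x, y ∈ (0, 1]` there is a unique `z ∈ (0, 1]` with `g (z, 1) = g (x, y)`; this `z` is
taken as the product of `x` and `y`.  It turns `(0, 1]` into a commutative monoid, with
associativity coming from `Admissible.assoc_aux`, and the monoid is Archimedean: powers of an
element `< 1` tend to `0` (`Admissible.archimedean`).

Suppose that `g (p, q) = g (1, 1)` with `1 < p` and `p * q < 1`, i.e. that `g` beats the constant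
product rule somewhere.  Put `β = 1 / p` and `α = q < β`, as elements of the monoid.  Scale
invariance yields `β ^ (n + 1) = α ^ n / p` (as real numbers) for all `n`, so `β ^ (n + 1) < α ^ n`.
On the other hand `α = β * w` with `w < 1`, so `β ^ n * β < β ^ n * w ^ n`, i.e. `β < w ^ n` for
all `n`, contradicting the Archimedean property.  This gives `Admissible.one_le_mul`, hence
`f_product ≿ g`.

If also `g ≿ f_product`, then every level curve of `g` through a diagonal point coincides with the
corresponding hyperbola, and all boundary inventories are `g`-indifferent
(`Admissible.boundary_eq`); so `g` is equivalent to the product.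
-/


/-- Both coordinates of the inventory are nonnegative. -/
def Nonneg2 (I : ℝ × ℝ) : Prop := 0 ≤ I.1 ∧ 0 ≤ I.2

/-- Both coordinates of the inventory are strictly positive. -/
def Pos2 (I : ℝ × ℝ) : Prop := 0 < I.1 ∧ 0 < I.2

/-- A trading function on two assets: strictly increasing in each coordinate
at strictly positive inventories and with closed upper and lower level sets. -/
structure IsTradingFunction2 (f : ℝ × ℝ → ℝ) : Prop where
  strictMono_fst : ∀ I : ℝ × ℝ, Pos2 I → ∀ t : ℝ, I.1 < t → f I < f (t, I.2)
  strictMono_snd : ∀ I : ℝ × ℝ, Pos2 I → ∀ t : ℝ, I.2 < t → f I < f (I.1, t)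
  closed_upper : ∀ J : ℝ × ℝ, Nonneg2 J →
    IsClosed {I : ℝ × ℝ | Nonneg2 I ∧ f J ≤ f I}
  closed_lower : ∀ J : ℝ × ℝ, Nonneg2 J →
    IsClosed {I : ℝ × ℝ | Nonneg2 I ∧ f I ≤ f J}

/-- Two trading functions are equivalent if they induce the same indifference
relation on nonnegative inventories. -/
def EquivMM2 (f g : ℝ × ℝ → ℝ) : Prop :=
  ∀ I J : ℝ × ℝ, Nonneg2 I → Nonneg2 J → (f I = f J ↔ g I = g J)

/-- Liquidity Additivity (Thomsen condition). -/
def LiquidityAdditive (f : ℝ × ℝ → ℝ) : Prop :=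
  ∀ I : ℝ × ℝ, Nonneg2 I → ∀ x y x' y' : ℝ, 0 ≤ x → 0 ≤ y → 0 ≤ x' → 0 ≤ y' →
    f (I.1 + x, I.2) = f (I.1, I.2 + y) →
    f (I.1 + x + x', I.2 + y) = f (I.1 + x, I.2 + y + y') →
    f (I.1 + x + x', I.2) = f (I.1, I.2 + y + y')

/-- Scale invariance axiom. -/
def ScaleInvariant2 (f : ℝ × ℝ → ℝ) : Prop :=
  ∀ I J : ℝ × ℝ, Nonneg2 I → Nonneg2 J → ∀ l : ℝ, 0 < l →
    f I = f J → f (l * I.1, l * I.2) = f (l * J.1, l * J.2)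

/-- Translation invariance axiom. -/
def TranslationInvariant2 (f : ℝ × ℝ → ℝ) : Prop :=
  ∀ (I J : ℝ × ℝ) (t : ℝ), Nonneg2 I → Nonneg2 J →
    Nonneg2 (I.1 + t, I.2 + t) → Nonneg2 (J.1 + t, J.2 + t) →
    f I = f J → f (I.1 + t, I.2 + t) = f (J.1 + t, J.2 + t)

/-- One invariance axiom. -/
def OneInvariant2 (f : ℝ × ℝ → ℝ) : Prop :=
  ∀ (I : ℝ × ℝ) (t : ℝ), Nonneg2 I → Nonneg2 (I.1 + t, I.2 + t) →
    f (I.1 + t, I.2 + t) = f I + t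

/-- Homogeneity in liquidity. -/
def Homogeneous2 (f : ℝ × ℝ → ℝ) : Prop :=
  ∀ I : ℝ × ℝ, Nonneg2 I → ∀ l : ℝ, 0 < l → f (l * I.1, l * I.2) = l * f I

/-- Symmetry axiom. -/
def Symmetric2 (f : ℝ × ℝ → ℝ) : Prop :=
  ∀ I : ℝ × ℝ, Nonneg2 I → f I = f (I.2, I.1)

/-- Sufficient funds axiom. -/
def SufficientFunds2 (f : ℝ × ℝ → ℝ) : Prop :=
  ∀ I J : ℝ × ℝ, Nonneg2 I → Nonneg2 J → f I = f J → Pos2 I → Pos2 J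

/-- Aversion to permanent loss: upper level sets are convex. -/
def AversionPL2 (f : ℝ × ℝ → ℝ) : Prop :=
  ∀ J : ℝ × ℝ, Nonneg2 J → Convex ℝ {I : ℝ × ℝ | Nonneg2 I ∧ f J ≤ f I}

/-- The two-asset constant product rule. -/
def fproduct2 (I : ℝ × ℝ) : ℝ := I.1 * I.2

/-- `f ≿ g` : starting from a balanced inventory, `f` offers (weakly) more
favorable terms of trade than `g`. -/
def Pref2 (f g : ℝ × ℝ → ℝ) : Prop :=
  ∀ I : ℝ × ℝ, Nonneg2 I → I.1 = I.2 → ∀ x y y' : ℝ, 0 < x → 0 < y → 0 < y' →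
    y ≤ I.2 → y' ≤ I.2 →
    f (I.1 + x, I.2 - y) = f I → g (I.1 + x, I.2 - y') = g I → y' ≤ y

open Filter Topology

/-- The class of trading functions the theorem is about: scale invariant, Liquidity Additive,
symmetric and sufficiently funded. -/
structure Admissible (g : ℝ × ℝ → ℝ) : Prop where
  trading : IsTradingFunction2 g
  scale : ScaleInvariant2 g
  additive : LiquidityAdditive g
  symmetric : Symmetric2 g
  funds : SufficientFunds2 g

namespace Admissible

variable {g : ℝ × ℝ → ℝ}

/-! ### Monotonicity, intermediate values and the boundary -/

lemma swap (h : Admissible g) {x y : ℝ} (hx : 0 < x) (hy : 0 < y) : g (x, y) = g (y, x) :=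
  h.symmetric (x, y) ⟨hx.le, hy.le⟩

lemma lt_fst (h : Admissible g) {x x' y : ℝ} (hx : 0 < x) (hy : 0 < y) (hlt : x < x') :
    g (x, y) < g (x', y) :=
  h.trading.strictMono_fst (x, y) ⟨hx, hy⟩ x' hlt

lemma lt_snd (h : Admissible g) {x y y' : ℝ} (hx : 0 < x) (hy : 0 < y) (hlt : y < y') :
    g (x, y) < g (x, y') :=
  h.trading.strictMono_snd (x, y) ⟨hx, hy⟩ y' hlt

lemma mono (h : Admissible g) {x x' y y' : ℝ} (hx : 0 < x) (hy : 0 < y) (hxx : x ≤ x')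
    (hyy : y ≤ y') : g (x, y) ≤ g (x', y') := by
  have h1 : g (x, y) ≤ g (x', y) := by
    rcases hxx.eq_or_lt with rfl | hlt
    · exact le_rfl
    · exact (h.lt_fst hx hy hlt).le
  rcases hyy.eq_or_lt with rfl | hlt
  · exact h1
  · exact h1.trans (h.lt_snd (hx.trans_le hxx) hy hlt).le

lemma le_of_le (h : Admissible g) {x x' y : ℝ} (hx' : 0 < x') (hy : 0 < y)
    (hle : g (x, y) ≤ g (x', y)) : x ≤ x' :=
  not_lt.1 fun hlt => not_lt.2 hle (h.lt_fst hx' hy hlt)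

lemma inj (h : Admissible g) {x x' y : ℝ} (hx : 0 < x) (hx' : 0 < x') (hy : 0 < y)
    (heq : g (x, y) = g (x', y)) : x = x' :=
  le_antisymm (h.le_of_le hx' hy heq.le) (h.le_of_le hx hy heq.ge)

/-- Intermediate value theorem along a path of inventories.  Closedness of the level sets is
enough, since the path is covered by an upper and a lower level set. -/
lemma ivt (h : Admissible g) {γ : ℝ → ℝ × ℝ} (hγ : Continuous γ) {l r : ℝ} (hlr : l ≤ r)
    (hpos : ∀ t ∈ Set.Icc l r, Nonneg2 (γ t)) {J : ℝ × ℝ} (hJ : Nonneg2 J)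
    (hl : g (γ l) ≤ g J) (hr : g J ≤ g (γ r)) : ∃ t ∈ Set.Icc l r, g (γ t) = g J := by
  have hU := (h.trading.closed_upper J hJ).preimage hγ
  have hL := (h.trading.closed_lower J hJ).preimage hγ
  have hll : l ∈ Set.Icc l r := ⟨le_rfl, hlr⟩
  have hrr : r ∈ Set.Icc l r := ⟨hlr, le_rfl⟩
  obtain ⟨t, ht, ⟨-, h1⟩, ⟨-, h2⟩⟩ :=
    isPreconnected_closed_iff.1 (isPreconnected_Icc (a := l) (b := r)) _ _ hU hL
      (fun t ht => (le_total (g J) (g (γ t))).imp (fun hh => ⟨hpos t ht, hh⟩)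
        (fun hh => ⟨hpos t ht, hh⟩))
      ⟨r, hrr, hpos r hrr, hr⟩ ⟨l, hll, hpos l hll, hl⟩
  exact ⟨t, ht, le_antisymm h2 h1⟩

/-- A boundary inventory is a limit of the strictly positive inventories obtained by adding
the same small amount of both assets. -/
lemma mem_of_closed {B : ℝ × ℝ} {s : Set (ℝ × ℝ)} (hs : IsClosed s)
    (hmem : ∀ ε : ℝ, 0 < ε → ε < 1 → (B.1 + ε, B.2 + ε) ∈ s) : B ∈ s := by
  have hlim : Tendsto (fun ε : ℝ => (B.1 + ε, B.2 + ε)) (𝓝[>] 0) (𝓝 B) := by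
    have hc : Continuous fun ε : ℝ => (B.1 + ε, B.2 + ε) := by fun_prop
    have := hc.tendsto 0
    simp only [add_zero] at this
    exact this.mono_left nhdsWithin_le_nhds
  refine hs.mem_of_tendsto hlim ?_
  filter_upwards [Ioo_mem_nhdsGT (zero_lt_one' ℝ)] with ε hε using hmem ε hε.1 hε.2

/-- Otherwise an intermediate value argument would produce a strictly positive inventory
indifferent to a boundary one. -/
lemma boundary_lt (h : Admissible g) {B J : ℝ × ℝ} (hB : Nonneg2 B) (hB' : ¬ Pos2 B)
    (hJ : Pos2 J) : g B < g J := by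
  by_contra! hle
  obtain ⟨b1, b2⟩ := B
  obtain ⟨j1, j2⟩ := J
  obtain ⟨hb1, hb2⟩ := hB
  obtain ⟨hj1, hj2⟩ := hJ
  simp only at hb1 hb2 hj1 hj2
  have hB1 : g (b1, b2) ≤ g (b1 + 1, b2 + 1) := by
    have hc := h.trading.closed_lower (b1 + 1, b2 + 1) ⟨by positivity, by positivity⟩
    refine (mem_of_closed hc fun ε hε hε1 => ⟨⟨?_, ?_⟩, ?_⟩).2
    · simp only; positivity
    · simp only; positivity
    · exact h.mono (by simp only; positivity) (by simp only; positivity)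
        (by simp only; linarith) (by simp only; linarith)
  have hγ : Continuous fun t : ℝ => (j1 + t * (b1 + 1), j2 + t * (b2 + 1)) := by fun_prop
  have hp : ∀ t ∈ Set.Icc (0 : ℝ) 1, Pos2 (j1 + t * (b1 + 1), j2 + t * (b2 + 1)) := by
    intro t ht
    have := ht.1
    constructor
    · simp only; positivity
    · simp only; positivity
  obtain ⟨t, ht, heq⟩ := h.ivt hγ zero_le_one (fun t ht => ⟨(hp t ht).1.le, (hp t ht).2.le⟩)
    (J := (b1, b2)) ⟨hb1, hb2⟩ (by simpa using hle)
    (hB1.trans (h.mono (by positivity) (by positivity) (by linarith) (by linarith)))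
  exact hB' (h.funds _ _ ⟨(hp t ht).1.le, (hp t ht).2.le⟩ ⟨hb1, hb2⟩ heq (hp t ht))

lemma boundary_le (h : Admissible g) {B B' : ℝ × ℝ} (hB : Nonneg2 B)
    (hB' : Nonneg2 B') (hnB' : ¬ Pos2 B') : g B' ≤ g B := by
  refine (mem_of_closed (h.trading.closed_upper B' hB') fun ε hε _ => ?_).2
  have hpos : Pos2 (B.1 + ε, B.2 + ε) :=
    ⟨add_pos_of_nonneg_of_pos hB.1 hε, add_pos_of_nonneg_of_pos hB.2 hε⟩
  exact ⟨⟨hpos.1.le, hpos.2.le⟩, (h.boundary_lt hB' hnB' hpos).le⟩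

lemma boundary_eq (h : Admissible g) {B B' : ℝ × ℝ} (hB : Nonneg2 B) (hnB : ¬ Pos2 B)
    (hB' : Nonneg2 B') (hnB' : ¬ Pos2 B') : g B = g B' :=
  le_antisymm (h.boundary_le hB' hB hnB) (h.boundary_le hB hB' hnB')

/-- Downward solvability, the form in which sufficient funds is used. -/
lemma exists_snd (h : Admissible g) {s t x y : ℝ} (hs : 0 < s) (ht : 0 < t) (hx : 0 < x)
    (hy : 0 < y) (hle : g (x, y) ≤ g (s, t)) : ∃ r, 0 < r ∧ r ≤ t ∧ g (s, r) = g (x, y) := by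
  have hγ : Continuous fun r : ℝ => (s, r) := by fun_prop
  have h0 : g (s, 0) < g (x, y) :=
    h.boundary_lt ⟨hs.le, le_rfl⟩ (fun hh => lt_irrefl _ hh.2) ⟨hx, hy⟩
  obtain ⟨r, hr, heq⟩ := h.ivt hγ ht.le (fun r hr => ⟨hs.le, hr.1⟩) (J := (x, y))
    ⟨hx.le, hy.le⟩ h0.le hle
  refine ⟨r, hr.1.lt_of_ne ?_, hr.2, heq⟩
  rintro rfl
  exact h0.ne heq

/-! ### The monoid of trades on `(0, 1]` -/

/-- Transitivity of `[a, b] ≡ [c, d]`, meaning `g (b, c) = g (a, d)`, along an increasing chain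
of intervals.  This is the Thomsen condition after exchanging coordinates by symmetry. -/
lemma thomsen (h : Admissible g) {a b c d e f : ℝ} (ha : 0 < a) (hb : 0 < b) (hac : a ≤ c)
    (hce : c ≤ e) (hbd : b ≤ d) (hdf : d ≤ f) (h1 : g (b, c) = g (a, d))
    (h2 : g (d, e) = g (c, f)) : g (b, e) = g (a, f) := by
  have key := h.additive (b, a) ⟨hb.le, ha.le⟩ (d - b) (c - a) (f - d) (e - c)
    (by linarith) (by linarith) (by linarith) (by linarith)
  simp only [add_sub_cancel] at key
  have hc := ha.trans_le hac
  have hd := hb.trans_le hbd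
  rw [h.swap ha (hd.trans_le hdf)]
  refine (key ?_ ?_).symm
  · rw [h1, h.swap ha hd]
  · rw [h2, h.swap hc (hd.trans_le hdf)]

/-- Here `[z₁, x] ≡ [y, 1]` and `[z₂, w] ≡ [y, 1]`, which is not an increasing chain.  An
auxiliary `b` with `[z₁, b] ≡ [z₂, w]` reduces to such a chain, and then turns out to be `x`. -/
lemma assoc_aux (h : Admissible g) {x y w z₁ z₂ : ℝ} (hx : 0 < x) (hy : 0 < y)
    (hw : 0 < w) (hw1 : w ≤ 1) (hz₁ : 0 < z₁) (hz₂ : 0 < z₂) (hy1 : y ≤ 1)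
    (h₁ : g (z₁, 1) = g (x, y)) (h₂ : g (z₂, 1) = g (y, w)) (hxw : x ≤ w) :
    g (z₁, w) = g (x, z₂) := by
  have hzz : z₁ ≤ z₂ := by
    refine h.le_of_le hz₂ one_pos ?_
    rw [h₁, h₂, h.swap hy hw]
    exact h.mono hx hy hxw le_rfl
  have hzy : z₂ ≤ y := by
    refine h.le_of_le hy one_pos ?_
    rw [h₂]
    exact h.mono hy hw le_rfl hw1
  have hzw : z₂ ≤ w := by
    refine h.le_of_le hw one_pos ?_
    rw [h₂, h.swap hy hw]
    exact h.mono hw hy le_rfl hy1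
  obtain ⟨b, hb, -, hbeq⟩ := h.exists_snd (s := z₂) (t := w) (x := z₁) (y := w) hz₂ hw hz₁ hw
    (h.mono hz₁ hw hzz le_rfl)
  rw [h.swap hz₂ hb] at hbeq
  have hbw : b ≤ w := by
    refine h.le_of_le hw hz₂ ?_
    rw [hbeq, h.swap hw hz₂]
    exact h.mono hz₁ hw hzz le_rfl
  have hby := h.thomsen hz₁ hb hzz hzy hbw hw1 hbeq (by rw [h₂, h.swap hw hy])
  rw [h₁] at hby
  rw [← hbeq, h.inj hb hx hy hby]

/-- The interval `(0, 1]`, carrying the multiplication determined by `g`. -/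
def Trades (_h : Admissible g) : Type := {x : ℝ // 0 < x ∧ x ≤ 1}

lemma exists_mul (h : Admissible g) (x y : Trades h) :
    ∃ z : Trades h, g (z.1, 1) = g (x.1, y.1) := by
  obtain ⟨r, hr, hr1, heq⟩ := h.exists_snd one_pos one_pos x.2.1 y.2.1
    (h.mono x.2.1 y.2.1 x.2.2 y.2.2)
  exact ⟨⟨r, hr, hr1⟩, by rw [← heq]; exact h.swap hr one_pos⟩

/-- The product of `x` and `y` is the `z` for which `(z, 1)` and `(x, y)` are `g`-indifferent;
if `g` is represented by `u x + u y` with `u 1 = 0`, then `u z = u x + u y`. -/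
noncomputable instance (h : Admissible g) : Mul (Trades h) :=
  ⟨fun x y => (h.exists_mul x y).choose⟩

noncomputable instance (h : Admissible g) : One (Trades h) := ⟨⟨1, one_pos, le_rfl⟩⟩

lemma one_val (h : Admissible g) : (1 : Trades h).1 = 1 := rfl

lemma mul_spec (h : Admissible g) (x y : Trades h) : g ((x * y).1, 1) = g (x.1, y.1) :=
  (h.exists_mul x y).choose_spec

lemma trades_ext (h : Admissible g) {x y : Trades h} (heq : g (x.1, 1) = g (y.1, 1)) : x = y :=
  Subtype.ext (h.inj x.2.1 y.2.1 one_pos heq)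

noncomputable instance (h : Admissible g) : CommMonoid (Trades h) where
  mul_assoc x y w := by
    refine h.trades_ext ?_
    rw [h.mul_spec, h.mul_spec]
    rcases le_total x.1 w.1 with hxw | hwx
    · exact h.assoc_aux x.2.1 y.2.1 w.2.1 w.2.2 (x * y).2.1 (y * w).2.1 y.2.2
        (h.mul_spec x y) (h.mul_spec y w) hxw
    · rw [h.swap (x * y).2.1 w.2.1, h.swap x.2.1 (y * w).2.1]
      refine (h.assoc_aux w.2.1 y.2.1 x.2.1 x.2.2 (y * w).2.1 (x * y).2.1 y.2.2
        ?_ ?_ hwx).symm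
      · rw [h.mul_spec, h.swap y.2.1 w.2.1]
      · rw [h.mul_spec, h.swap x.2.1 y.2.1]
  one_mul x := by
    refine h.trades_ext ?_
    rw [h.mul_spec, h.one_val]
    exact h.swap one_pos x.2.1
  mul_one x := by
    refine h.trades_ext ?_
    rw [h.mul_spec, h.one_val]
  mul_comm x y := by
    refine h.trades_ext ?_
    rw [h.mul_spec, h.mul_spec]
    exact h.swap x.2.1 y.2.1

lemma mul_le_right (h : Admissible g) (x y : Trades h) : (x * y).1 ≤ y.1 := by
  refine h.le_of_le y.2.1 one_pos ?_
  rw [h.mul_spec, h.swap y.2.1 one_pos]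
  exact h.mono x.2.1 y.2.1 x.2.2 le_rfl

lemma mul_le_left (h : Admissible g) (x y : Trades h) : (x * y).1 ≤ x.1 := by
  rw [mul_comm]
  exact h.mul_le_right y x

lemma lt_of_mul_lt (h : Admissible g) {x y z : Trades h} (hlt : (x * y).1 < (x * z).1) :
    y.1 < z.1 := by
  by_contra! hle
  have h1 := h.lt_fst (x * y).2.1 one_pos hlt
  rw [h.mul_spec, h.mul_spec] at h1
  exact absurd h1 (not_lt.2 (h.mono x.2.1 z.2.1 le_rfl hle))

/-- The powers of `w < 1` decrease; a positive limit `L` would satisfy `g (L, 1) ≤ g (L, w)`. -/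
lemma archimedean (h : Admissible g) {w : Trades h} (hw : w.1 < 1) {b : ℝ} (hb : 0 < b) :
    ∃ n : ℕ, (w ^ n).1 ≤ b := by
  by_contra! hlt
  have hanti : Antitone fun n : ℕ => (w ^ n).1 := antitone_nat_of_succ_le fun n => by
    rw [pow_succ]
    exact h.mul_le_left _ _
  have hbdd : BddBelow (Set.range fun n : ℕ => (w ^ n).1) :=
    ⟨b, by rintro _ ⟨n, rfl⟩; exact (hlt n).le⟩
  have hlim := tendsto_atTop_ciInf hanti hbdd
  set L := ⨅ n : ℕ, (w ^ n).1
  have hL : 0 < L := hb.trans_le (le_ciInf fun n => (hlt n).le)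
  -- `g` itself need not be continuous, so the limit is taken inside the upper level set of an
  -- inventory lying strictly between `(L, w)` and `(L, 1)`.
  obtain ⟨m, hwm, hm1⟩ := exists_between hw
  have hm : 0 < m := w.2.1.trans hwm
  have hclosed := h.trading.closed_upper (L, m) ⟨hL.le, hm.le⟩
  have hlim2 : Tendsto (fun n : ℕ => ((w ^ n).1, w.1)) atTop (𝓝 (L, w.1)) :=
    hlim.prodMk_nhds tendsto_const_nhds
  have hmem := hclosed.mem_of_tendsto hlim2 (Eventually.of_forall fun n => by
    refine ⟨⟨(w ^ n).2.1.le, w.2.1.le⟩, ?_⟩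
    have h1 := h.mul_spec (w ^ n) w
    rw [← pow_succ] at h1
    rw [← h1]
    exact h.mono hL hm (ciInf_le hbdd (n + 1)) hm1.le)
  exact absurd hmem.2 (not_le.2 (h.lt_snd hL w.2.1 hwm))

/-! ### Comparison with the constant product rule -/

/-- The level curve of `g` through `(1, 1)` lies above the hyperbola. -/
lemma one_le_mul (h : Admissible g) {p q : ℝ} (hp : 1 < p) (hq : 0 < q)
    (heq : g (p, q) = g (1, 1)) : 1 ≤ p * q := by
  by_contra! hpq
  have hp0 : 0 < p := one_pos.trans hp
  have hβ0 : 0 < 1 / p := by positivity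
  have hβ1 : 1 / p < 1 := (div_lt_one hp0).2 hp
  have hqβ : q < 1 / p := by rw [lt_div_iff₀ hp0]; linarith
  let α : Trades h := ⟨q, hq, (hqβ.trans hβ1).le⟩
  let β : Trades h := ⟨1 / p, hβ0, hβ1.le⟩
  obtain ⟨w, hw0, -, hweq⟩ := h.exists_snd (s := 1 / p) (t := 1) (x := q) (y := 1) hβ0 one_pos hq
    one_pos (h.mono hq one_pos hqβ.le le_rfl)
  have hw1 : w < 1 := by
    by_contra! hle
    exact absurd hweq (ne_of_gt ((h.lt_fst hq one_pos hqβ).trans_le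
      (h.mono hβ0 one_pos le_rfl hle)))
  let ω : Trades h := ⟨w, hw0, hw1.le⟩
  have hα : α = β * ω := h.trades_ext (by rw [h.mul_spec]; exact hweq.symm)
  -- Scaling by `1 / p` carries the powers of `α` to those of `β`, shifted by one.
  have hshift : ∀ n : ℕ, (β ^ (n + 1)).1 = (1 / p) * (α ^ n).1 := by
    intro n
    induction n with
    | zero => rw [zero_add, pow_one, pow_zero, h.one_val, mul_one]
    | succ n ih =>
      have hle : (α ^ (n + 1)).1 ≤ q := by
        rw [pow_succ]
        exact h.mul_le_right _ _
      -- `[α ^ (n + 1), α ^ n] ≡ [q, 1] ≡ [1, p]`.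
      have hch : g ((α ^ n).1, 1) = g ((α ^ (n + 1)).1, p) := by
        refine h.thomsen (c := q) (d := 1) (α ^ (n + 1)).2.1 (α ^ n).2.1 hle
          (hqβ.trans hβ1).le (α ^ n).2.2 hp.le ?_ ?_
        · rw [pow_succ, h.mul_spec]
        · rw [← heq, h.swap hp0 hq]
      have hsc := h.scale _ _ ⟨(α ^ n).2.1.le, zero_le_one⟩ ⟨(α ^ (n + 1)).2.1.le, hp0.le⟩
        (1 / p) hβ0 hch
      simp only [mul_one, one_div_mul_cancel hp0.ne'] at hsc
      refine h.inj (β ^ (n + 1 + 1)).2.1 (mul_pos hβ0 (α ^ (n + 1)).2.1) one_pos ?_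
      rw [← hsc, pow_succ, h.mul_spec, ih]
  obtain ⟨n, hn⟩ := h.archimedean (w := ω) hw1 hβ0
  have hlt : (β ^ n * β).1 < (β ^ n * ω ^ n).1 := by
    rw [← pow_succ, ← mul_pow, ← hα, hshift]
    exact mul_lt_of_lt_one_left (α ^ n).2.1 hβ1
  exact absurd (h.lt_of_mul_lt hlt) (not_lt.2 hn)

lemma pref (h : Admissible g) : Pref2 fproduct2 g := by
  rintro ⟨a, a'⟩ - haa x y y' hx hy hy' hya hya' hf hgeq
  simp only at haa hya hya' hf hgeq
  subst haa
  simp only [fproduct2] at hf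
  have ha : 0 < a := hy.trans_le hya
  have hpos : 0 < a - y' :=
    (h.funds (a, a) (a + x, a - y') ⟨ha.le, ha.le⟩ ⟨by simp only; positivity, by simp only; linarith⟩
      hgeq.symm ⟨ha, ha⟩).2
  have hsc := h.scale _ _ ⟨by simp only; positivity, hpos.le⟩ ⟨ha.le, ha.le⟩ (1 / a)
    (by positivity) hgeq
  simp only [one_div_mul_cancel ha.ne'] at hsc
  have h1 : 1 < 1 / a * (a + x) := by
    rw [one_div, inv_mul_eq_div, lt_div_iff₀ ha]; linarith
  have h2 := h.one_le_mul h1 (by positivity) hsc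
  have h3 : a * a ≤ (a + x) * (a - y') := by
    have h4 : 1 / a * (a + x) * (1 / a * (a - y')) = (a + x) * (a - y') / (a * a) := by
      field_simp
    rwa [h4, one_le_div (by positivity)] at h2
  rw [← hf] at h3
  have := le_of_mul_le_mul_left h3 (by positivity)
  linarith

/-- The trade leading from the diagonal point `(√(s t), √(s t))` to first coordinate `s` is the
same under `g` and under the product. -/
lemma eq_diag_of_lt (h : Admissible g) (hpref : Pref2 g fproduct2) {s t : ℝ} (ht : 0 < t)
    (hts : t < s) : g (s, t) = g (√(s * t), √(s * t)) := by
  have hs : 0 < s := ht.trans hts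
  set a := √(s * t) with ha_def
  have haa : a * a = s * t := Real.mul_self_sqrt (by positivity)
  have ha : 0 < a := Real.sqrt_pos.2 (by positivity)
  have has : a < s := by nlinarith
  have hta : t < a := by nlinarith
  obtain ⟨r, hr, hra, hreq⟩ := h.exists_snd hs ha ha ha (h.mono ha ha has.le le_rfl)
  have hr_lt : r < a := by
    refine lt_of_le_of_ne hra ?_
    rintro hra'
    rw [hra'] at hreq
    exact absurd hreq (h.lt_fst ha ha has).ne'
  have e1 : a + (s - a) = s := by ring
  have e2 : a - (a - r) = r := by ring
  have e3 : a - (a - t) = t := by ring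
  have hg' : g (a + (s - a), a - (a - r)) = g (a, a) := by rw [e1, e2, hreq]
  have hf' : fproduct2 (a + (s - a), a - (a - t)) = fproduct2 (a, a) := by
    rw [e1, e3]; exact haa.symm
  have k1 := h.pref (a, a) ⟨ha.le, ha.le⟩ rfl (s - a) (a - t) (a - r) (by linarith) (by linarith)
    (by linarith) (by simp only; linarith) (by simp only; linarith) hf' hg'
  have k2 := hpref (a, a) ⟨ha.le, ha.le⟩ rfl (s - a) (a - r) (a - t) (by linarith) (by linarith)
    (by linarith) (by simp only; linarith) (by simp only; linarith) hg' hf'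
  have hrt : r = t := by linarith
  rw [← hrt, hreq]

lemma eq_diag (h : Admissible g) (hpref : Pref2 g fproduct2) {s t : ℝ} (hs : 0 < s)
    (ht : 0 < t) : g (s, t) = g (√(s * t), √(s * t)) := by
  rcases lt_trichotomy s t with hst | rfl | hts
  · rw [h.swap hs ht, mul_comm s t]
    exact h.eq_diag_of_lt hpref hs hst
  · rw [Real.sqrt_mul_self hs.le]
  · exact h.eq_diag_of_lt hpref ht hts

lemma diag_inj (h : Admissible g) {a b : ℝ} (ha : 0 < a) (hb : 0 < b)
    (heq : g (a, a) = g (b, b)) : a = b := by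
  rcases lt_trichotomy a b with hab | hab | hab
  · exact absurd heq ((h.lt_fst ha ha hab).trans_le (h.mono hb ha le_rfl hab.le)).ne
  · exact hab
  · exact absurd heq ((h.lt_fst hb hb hab).trans_le (h.mono ha hb le_rfl hab.le)).ne'

lemma fproduct2_eq_zero {I : ℝ × ℝ} (hI : Nonneg2 I) (hn : ¬ Pos2 I) : fproduct2 I = 0 := by
  by_contra hne
  obtain ⟨h1, h2⟩ := mul_ne_zero_iff.1 hne
  exact hn ⟨hI.1.lt_of_ne' h1, hI.2.lt_of_ne' h2⟩

lemma equiv (h : Admissible g) (hpref : Pref2 g fproduct2) : EquivMM2 g fproduct2 := by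
  intro I J hI hJ
  by_cases hPI : Pos2 I <;> by_cases hPJ : Pos2 J
  · obtain ⟨a, b⟩ := I
    obtain ⟨c, d⟩ := J
    have hab : 0 < a * b := mul_pos hPI.1 hPI.2
    have hcd : 0 < c * d := mul_pos hPJ.1 hPJ.2
    rw [h.eq_diag hpref hPI.1 hPI.2, h.eq_diag hpref hPJ.1 hPJ.2]
    simp only [fproduct2]
    refine ⟨fun heq => ?_, fun heq => by rw [heq]⟩
    exact (Real.sqrt_inj hab.le hcd.le).1
      (h.diag_inj (Real.sqrt_pos.2 hab) (Real.sqrt_pos.2 hcd) heq)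
  · have h1 := h.boundary_lt hJ hPJ hPI
    have h2 : 0 < fproduct2 I := mul_pos hPI.1 hPI.2
    rw [fproduct2_eq_zero hJ hPJ]
    exact iff_of_false h1.ne' h2.ne'
  · have h1 := h.boundary_lt hI hPI hPJ
    have h2 : 0 < fproduct2 J := mul_pos hPJ.1 hPJ.2
    rw [fproduct2_eq_zero hI hPI]
    exact iff_of_false h1.ne h2.ne
  · rw [fproduct2_eq_zero hI hPI, fproduct2_eq_zero hJ hPJ]
    exact iff_of_true (h.boundary_eq hI hPI hJ hPJ) rfl

lemma pref_of_equiv (he : EquivMM2 g fproduct2) : Pref2 g fproduct2 := by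
  rintro ⟨a, a'⟩ hI haa x y y' hx hy hy' hya hya' hgeq hf
  simp only at haa hya hya' hf hgeq
  subst haa
  have ha : 0 < a := hy.trans_le hya
  have h1 := (he _ _ ⟨by simp only; positivity, by simp only; linarith⟩ hI).1 hgeq
  rw [← hf] at h1
  simp only [fproduct2] at h1
  have := mul_left_cancel₀ (by positivity) h1
  linarith

end Admissible

/-- Theorem 6: the constant product rule is trader optimal within the class of
scale-invariant, Liquidity Additive, symmetric and sufficiently funded
two-asset AMMs. -/
theorem stmt14 (g : ℝ × ℝ → ℝ) (hg : IsTradingFunction2 g)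
    (hsc : ScaleInvariant2 g) (hla : LiquidityAdditive g) (hsym : Symmetric2 g)
    (hsf : SufficientFunds2 g) :
    Pref2 fproduct2 g ∧
      ((Pref2 fproduct2 g ∧ Pref2 g fproduct2) ↔ EquivMM2 g fproduct2) := by
  have h : Admissible g := ⟨hg, hsc, hla, hsym, hsf⟩
  exact ⟨h.pref, fun hp => h.equiv hp.2, fun he => ⟨h.pref, Admissible.pref_of_equiv he⟩⟩
end
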